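/- Let n ≥ 7, let p = (n+6)/(n−6), and let u : ℝⁿ → ℝ be a smooth solution of the triharmonic Lane–Emden equation (−Δ)³u = |u|^{p−1}u that is stable outside some compact set Θ ⊂ ℝⁿ. Then u has finite energy, namely ∫_{ℝⁿ} ‖∇(Δu)‖² dx = ∫_{ℝⁿ} |u|^{p+1} dx < +∞. -/

import Mathlib

open MeasureTheory Filter

noncomputable section

/-- The Euclidean Laplacian of `u` at `x`. -/
def laplacian {n : ℕ} (u : EuclideanSpace ℝ (Fin n) → ℝ) (x : EuclideanSpace ℝ (Fin n)) : ℝ :=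
  ∑ i : Fin n, iteratedFDeriv ℝ 2 u x ![EuclideanSpace.single i 1, EuclideanSpace.single i 1]

/-! Truncate `u` near `Θ` to a function `v` on which stability can be tested, and set
`E = ∫ ζ ^ (2 * k + 6) * |u| ^ (p - 1) * v ^ 2` and `D = ∫ ζ ^ (2 * k + 6) * ‖∇Δv‖ ^ 2` for a cutoff
`ζ` at scale `R`. Up to terms controlled by `Q = R⁻⁶ ∫ ζ ^ (2 * k) * v ^ 2`, stability tested on
`v * ζ ^ (k + 3)` reads `p * E ≤ (1 + δ) * D`, while the equation tested against
`v * ζ ^ (2 * k + 6)` reads `(1 - δ) * D ≤ E + const`. For `k` large, Young's inequality gives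
`Q ≤ ε * E + C * R ^ (n - 6 * (p + 1) / (p - 1))`, and the exponent of `R` is nonpositive exactly
when `(n - 6) * p ≤ n + 6`. As `p > 1`, everything is absorbed and `E` and `D` stay bounded as
`R → ∞`. Once `u` itself has finite energy, `Q → 0`, and testing the equation against
`u * ζ ^ (2 * k + 6)` gives the identity in the limit. -/

open scoped ContDiff Gradient

section Development

variable {n : ℕ}

local notation "ℝ^" n:max => EuclideanSpace ℝ (Fin n)

/-- The `i`-th partial derivative of a function on `ℝⁿ`, written `∂[i] f`. -/
def partialDeriv (i : Fin n) (f : ℝ^n → ℝ) (x : ℝ^n) : ℝ :=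
  fderiv ℝ f x (EuclideanSpace.single i 1)

local notation "∂[" i "]" => partialDeriv i

section Calculus

variable {f g : ℝ^n → ℝ}

@[fun_prop]
lemma contDiff_partialDeriv (hf : ContDiff ℝ ∞ f) (i : Fin n) : ContDiff ℝ ∞ (∂[i] f) :=
  (hf.fderiv_right (m := ∞) (by simp)).clm_apply contDiff_const

lemma partialDeriv_add (hf : Differentiable ℝ f) (hg : Differentiable ℝ g) (i : Fin n) :
    ∂[i] (fun x => f x + g x) = fun x => ∂[i] f x + ∂[i] g x := by
  funext x
  simp [partialDeriv, fderiv_fun_add (hf x) (hg x)]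

lemma partialDeriv_sum {ι : Type*} (s : Finset ι) {f : ι → ℝ^n → ℝ}
    (hf : ∀ a ∈ s, Differentiable ℝ (f a)) (i : Fin n) :
    ∂[i] (fun x => ∑ a ∈ s, f a x) = fun x => ∑ a ∈ s, ∂[i] (f a) x := by
  funext x
  simp [partialDeriv, fderiv_fun_sum fun a ha => hf a ha x]

lemma partialDeriv_const_mul (hf : Differentiable ℝ f) (c : ℝ) (i : Fin n) :
    ∂[i] (fun x => c * f x) = fun x => c * ∂[i] f x := by
  funext x
  simp [partialDeriv, fderiv_const_mul (hf x)]

lemma partialDeriv_mul (hf : Differentiable ℝ f) (hg : Differentiable ℝ g) (i : Fin n) :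
    ∂[i] (fun x => f x * g x) = fun x => f x * ∂[i] g x + ∂[i] f x * g x := by
  funext x
  simp [partialDeriv, fderiv_fun_mul (hf x) (hg x), mul_comm]

lemma partialDeriv_pow_succ (hf : Differentiable ℝ f) (m : ℕ) (i : Fin n) :
    ∂[i] (fun x => f x ^ (m + 1)) = fun x => (m + 1) * (f x ^ m * ∂[i] f x) := by
  funext x
  simp only [partialDeriv, fderiv_fun_pow (m + 1) (hf x), smul_apply,
    smul_eq_mul, nsmul_eq_mul, Nat.add_sub_cancel, Nat.cast_add_one]
  ring

lemma partialDeriv_comp_smul (f : ℝ^n → ℝ) (a : ℝ) (i : Fin n) :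
    ∂[i] (fun x => f (a • x)) = fun x => a * ∂[i] f (a • x) := by
  funext x
  simp [partialDeriv, fderiv_comp_smul]

lemma partialDeriv_partialDeriv (hf : ContDiff ℝ ∞ f) (i j : Fin n) (x : ℝ^n) :
    ∂[j] (∂[i] f) x =
      fderiv ℝ (fderiv ℝ f) x (EuclideanSpace.single j 1) (EuclideanSpace.single i 1) := by
  have hf' : Differentiable ℝ (fderiv ℝ f) :=
    (hf.fderiv_right (m := ∞) (by simp)).differentiable (by simp)
  change fderiv ℝ (fun y => fderiv ℝ f y (EuclideanSpace.single i 1)) x _ = _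
  simp [fderiv_clm_apply (hf' x) (differentiableAt_const _)]

lemma partialDeriv_comm (hf : ContDiff ℝ ∞ f) (i j : Fin n) :
    ∂[i] (∂[j] f) = ∂[j] (∂[i] f) := by
  funext x
  rw [partialDeriv_partialDeriv hf, partialDeriv_partialDeriv hf]
  refine hf.contDiffAt.isSymmSndFDerivAt ?_ _ _
  rw [minSmoothness_of_isRCLikeNormedField]
  exact WithTop.coe_le_coe.mpr le_top

lemma laplacian_eq_sum_partialDeriv (hf : ContDiff ℝ ∞ f) :
    laplacian f = fun x => ∑ i, ∂[i] (∂[i] f) x := by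
  funext x
  simp [laplacian, iteratedFDeriv_two_apply, partialDeriv_partialDeriv hf]

@[fun_prop]
lemma contDiff_laplacian (hf : ContDiff ℝ ∞ f) : ContDiff ℝ ∞ (laplacian f) := by
  rw [laplacian_eq_sum_partialDeriv hf]
  fun_prop

lemma gradient_apply (f : ℝ^n → ℝ) (x : ℝ^n) (i : Fin n) : ∇ f x i = ∂[i] f x := by
  rw [partialDeriv, ← inner_gradient_left, EuclideanSpace.inner_single_right]
  simp

lemma inner_gradient_gradient (f g : ℝ^n → ℝ) (x : ℝ^n) :
    inner ℝ (∇ f x) (∇ g x) = ∑ i, ∂[i] f x * ∂[i] g x := by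
  simp only [PiLp.inner_apply, gradient_apply, RCLike.inner_apply, conj_trivial, mul_comm]

lemma norm_gradient_sq (f : ℝ^n → ℝ) (x : ℝ^n) : ‖∇ f x‖ ^ 2 = ∑ i, ∂[i] f x ^ 2 := by
  simp [EuclideanSpace.real_norm_sq_eq, gradient_apply]

lemma abs_partialDeriv_le_norm_gradient (f : ℝ^n → ℝ) (x : ℝ^n) (i : Fin n) :
    |∂[i] f x| ≤ ‖∇ f x‖ := by
  simpa [gradient_apply] using PiLp.norm_apply_le (∇ f x) i

@[fun_prop]
lemma continuous_gradient (hf : ContDiff ℝ ∞ f) : Continuous (∇ f) :=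
  (InnerProductSpace.toDual ℝ (ℝ^n)).symm.continuous.comp (hf.continuous_fderiv (by simp))

lemma laplacian_congr {x : ℝ^n} (h : f =ᶠ[nhds x] g) : laplacian f =ᶠ[nhds x] laplacian g := by
  filter_upwards [h.iteratedFDeriv ℝ 2] with y hy
  simp only [laplacian, hy]

lemma gradient_congr {x : ℝ^n} (h : f =ᶠ[nhds x] g) : ∇ f x = ∇ g x := by
  rw [gradient, gradient, h.fderiv_eq]

end Calculus

section CompactSupport

variable {f : ℝ^n → ℝ}

lemma hasCompactSupport_partialDeriv (hf : HasCompactSupport f) (i : Fin n) :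
    HasCompactSupport (∂[i] f) :=
  hf.fderiv_apply ℝ _

lemma hasCompactSupport_laplacian (hf : HasCompactSupport f) :
    HasCompactSupport (laplacian f) :=
  (hf.iteratedFDeriv 2).comp_left
    (g := fun L : ContinuousMultilinearMap ℝ (fun _ : Fin 2 => ℝ^n) ℝ =>
      ∑ i, L ![EuclideanSpace.single i 1, EuclideanSpace.single i 1]) (by simp)

lemma hasCompactSupport_gradient (hf : HasCompactSupport f) : HasCompactSupport (∇ f) :=
  (hf.fderiv ℝ).comp_left (map_zero _)

end CompactSupport

section IntegrationByParts

variable {f g : ℝ^n → ℝ}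

lemma integral_mul_partialDeriv (hf : ContDiff ℝ ∞ f) (hg : ContDiff ℝ ∞ g)
    (hgc : HasCompactSupport g) (i : Fin n) :
    ∫ x, f x * ∂[i] g x = -∫ x, ∂[i] f x * g x := by
  refine integral_mul_fderiv_eq_neg_fderiv_mul_of_integrable ?_ ?_ ?_
    (fun x _ => hf.differentiable (by simp) x) (fun x _ => hg.differentiable (by simp) x)
  · exact Continuous.integrable_of_hasCompactSupport
      ((contDiff_partialDeriv hf i).continuous.mul hg.continuous) hgc.mul_left
  · exact Continuous.integrable_of_hasCompactSupport (by fun_prop)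
      (hasCompactSupport_partialDeriv hgc i).mul_left
  · exact Continuous.integrable_of_hasCompactSupport (by fun_prop) hgc.mul_left

lemma integral_partialDeriv_eq_zero (hg : ContDiff ℝ ∞ g) (hgc : HasCompactSupport g)
    (i : Fin n) : ∫ x, ∂[i] g x = 0 := by
  simpa [partialDeriv] using
    integral_mul_partialDeriv (f := fun _ => 1) contDiff_const hg hgc i

lemma integrable_partialDeriv (hg : ContDiff ℝ ∞ g) (hgc : HasCompactSupport g) (i : Fin n) :
    Integrable (∂[i] g) :=
  (contDiff_partialDeriv hg i).continuous.integrable_of_hasCompactSupport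
    (hasCompactSupport_partialDeriv hgc i)

lemma integrable_divergence {F : Fin n → ℝ^n → ℝ} (hF : ∀ i, ContDiff ℝ ∞ (F i))
    (hFc : ∀ i, HasCompactSupport (F i)) : Integrable fun x => ∑ i, ∂[i] (F i) x :=
  integrable_finsetSum _ fun i _ => integrable_partialDeriv (hF i) (hFc i) i

lemma integral_divergence_eq_zero {F : Fin n → ℝ^n → ℝ} (hF : ∀ i, ContDiff ℝ ∞ (F i))
    (hFc : ∀ i, HasCompactSupport (F i)) : ∫ x, ∑ i, ∂[i] (F i) x = 0 := by
  rw [integral_finsetSum _ fun i _ => integrable_partialDeriv (hF i) (hFc i) i]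
  exact Finset.sum_eq_zero fun i _ => integral_partialDeriv_eq_zero (hF i) (hFc i) i

lemma integral_inner_gradient_gradient (hf : ContDiff ℝ ∞ f) (hg : ContDiff ℝ ∞ g)
    (hgc : HasCompactSupport g) :
    ∫ x, inner ℝ (∇ f x) (∇ g x) = -∫ x, laplacian f x * g x := by
  have hdiv : ∀ x, ∑ i, ∂[i] (fun y => ∂[i] f y * g y) x
      = inner ℝ (∇ f x) (∇ g x) + laplacian f x * g x := fun x => by
    rw [inner_gradient_gradient, laplacian_eq_sum_partialDeriv hf, Finset.sum_mul,
      ← Finset.sum_add_distrib]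
    refine Finset.sum_congr rfl fun i _ => ?_
    rw [partialDeriv_mul] <;> fun_prop (disch := simp)
  have hint : Integrable fun x => laplacian f x * g x :=
    Continuous.integrable_of_hasCompactSupport (by fun_prop) hgc.mul_left
  have hzero := integral_divergence_eq_zero (F := fun i x => ∂[i] f x * g x)
    (fun i => by fun_prop) fun i => hgc.mul_left
  have hinner : Integrable fun x => inner ℝ (∇ f x) (∇ g x) :=
    Continuous.integrable_of_hasCompactSupport (by fun_prop)
      ((hasCompactSupport_gradient hgc).mono fun x hx h => hx (by simp [h]))
  simp only [hdiv] at hzero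
  rw [integral_add hinner hint] at hzero
  exact eq_neg_of_add_eq_zero_left hzero

lemma integral_laplacian_mul (hf : ContDiff ℝ ∞ f) (hg : ContDiff ℝ ∞ g)
    (hgc : HasCompactSupport g) :
    ∫ x, laplacian f x * g x = ∫ x, f x * laplacian g x := by
  have hdiv : ∀ x, ∑ i, ∂[i] (fun y => ∂[i] f y * g y - f y * ∂[i] g y) x
      = laplacian f x * g x - f x * laplacian g x := fun x => by
    rw [laplacian_eq_sum_partialDeriv hf, laplacian_eq_sum_partialDeriv hg, Finset.sum_mul,
      Finset.mul_sum, ← Finset.sum_sub_distrib]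
    refine Finset.sum_congr rfl fun i _ => ?_
    simp only [sub_eq_add_neg, neg_eq_neg_one_mul (f _ * _)]
    rw [partialDeriv_add, partialDeriv_const_mul, partialDeriv_mul, partialDeriv_mul]
    · ring
    all_goals fun_prop (disch := simp)
  have hzero := integral_divergence_eq_zero
    (F := fun i x => ∂[i] f x * g x - f x * ∂[i] g x) (fun i => by fun_prop)
    fun i => hgc.mul_left.sub (hasCompactSupport_partialDeriv hgc i).mul_left
  simp only [hdiv] at hzero
  rw [integral_sub] at hzero
  · exact sub_eq_zero.mp hzero
  · exact Continuous.integrable_of_hasCompactSupport (by fun_prop) hgc.mul_left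
  · exact Continuous.integrable_of_hasCompactSupport (by fun_prop)
      (hasCompactSupport_laplacian hgc).mul_left

lemma integral_inner_gradient_laplacian (hf : ContDiff ℝ ∞ f) (hg : ContDiff ℝ ∞ g)
    (hgc : HasCompactSupport g) :
    ∫ x, inner ℝ (∇ (laplacian f) x) (∇ (laplacian g) x)
      = -∫ x, laplacian (laplacian (laplacian f)) x * g x := by
  rw [integral_inner_gradient_gradient (by fun_prop) (by fun_prop)
    (hasCompactSupport_laplacian hgc), integral_laplacian_mul (by fun_prop) hg hgc]

end IntegrationByParts

section ProductRule

variable {f η : ℝ^n → ℝ}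

/-- The Frobenius norm of the Hessian of `f` at `x`. -/
def hessianNorm (f : ℝ^n → ℝ) (x : ℝ^n) : ℝ :=
  √(∑ i, ∑ j, ∂[j] (∂[i] f) x ^ 2)

lemma hessianNorm_nonneg (f : ℝ^n → ℝ) (x : ℝ^n) : 0 ≤ hessianNorm f x :=
  Real.sqrt_nonneg _

lemma hessianNorm_sq (f : ℝ^n → ℝ) (x : ℝ^n) :
    hessianNorm f x ^ 2 = ∑ i, ∑ j, ∂[j] (∂[i] f) x ^ 2 :=
  Real.sq_sqrt (by positivity)

lemma abs_partialDeriv_partialDeriv_le_hessianNorm (f : ℝ^n → ℝ) (x : ℝ^n) (i j : Fin n) :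
    |∂[j] (∂[i] f) x| ≤ hessianNorm f x :=
  Real.abs_le_sqrt <|
    (Finset.single_le_sum (f := fun j => ∂[j] (∂[i] f) x ^ 2) (by intros; positivity)
      (Finset.mem_univ j)).trans
    (Finset.single_le_sum (f := fun i => ∑ j, ∂[j] (∂[i] f) x ^ 2) (by intros; positivity)
      (Finset.mem_univ i))

lemma abs_laplacian_le_hessianNorm (hf : ContDiff ℝ ∞ f) (x : ℝ^n) :
    |laplacian f x| ≤ n * hessianNorm f x := by
  rw [laplacian_eq_sum_partialDeriv hf]
  calc |∑ i, ∂[i] (∂[i] f) x| ≤ ∑ i, |∂[i] (∂[i] f) x| := Finset.abs_sum_le_sum_abs _ _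
    _ ≤ ∑ _i : Fin n, hessianNorm f x := by
      gcongr
      exact abs_partialDeriv_partialDeriv_le_hessianNorm f x _ _
    _ = n * hessianNorm f x := by simp

@[fun_prop]
lemma continuous_hessianNorm (hf : ContDiff ℝ ∞ f) : Continuous (hessianNorm f) := by
  unfold hessianNorm
  fun_prop

lemma norm_le_card_mul_of_abs_apply_le {y : ℝ^n} {B : ℝ} (hy : ∀ i, |y i| ≤ B) :
    ‖y‖ ≤ n * B := by
  calc ‖y‖ = ‖∑ i, y i • EuclideanSpace.basisFun (Fin n) ℝ i‖ := by
        simpa using congrArg norm ((EuclideanSpace.basisFun (Fin n) ℝ).sum_repr y).symm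
    _ ≤ ∑ i, ‖y i • EuclideanSpace.basisFun (Fin n) ℝ i‖ := norm_sum_le _ _
    _ ≤ ∑ _i : Fin n, B := by
      gcongr with i
      simpa [norm_smul] using hy i
    _ = n * B := by simp

lemma partialDeriv_laplacian_mul (hf : ContDiff ℝ ∞ f) (hη : ContDiff ℝ ∞ η) (j : Fin n)
    (x : ℝ^n) :
    ∂[j] (laplacian fun y => f y * η y) x = η x * ∂[j] (laplacian f) x +
      ∑ i, (∂[i] (∂[i] f) x * ∂[j] η x + 2 * (∂[j] (∂[i] f) x * ∂[i] η x)
        + 2 * (∂[i] f x * ∂[j] (∂[i] η) x) + ∂[j] f x * ∂[i] (∂[i] η) x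
        + f x * ∂[j] (∂[i] (∂[i] η)) x) := by
  have hsecond : ∀ i, ∂[i] (∂[i] fun y => f y * η y) = fun y =>
      f y * ∂[i] (∂[i] η) y + 2 * (∂[i] f y * ∂[i] η y) + ∂[i] (∂[i] f) y * η y := fun i => by
    rw [partialDeriv_mul, partialDeriv_add, partialDeriv_mul, partialDeriv_mul]
    · funext y
      ring
    all_goals fun_prop (disch := simp)
  rw [laplacian_eq_sum_partialDeriv (hf.mul hη), laplacian_eq_sum_partialDeriv hf]
  simp only [hsecond]
  rw [partialDeriv_sum, partialDeriv_sum, Finset.mul_sum, ← Finset.sum_add_distrib]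
  · refine Finset.sum_congr rfl fun i _ => ?_
    rw [partialDeriv_add, partialDeriv_add, partialDeriv_const_mul, partialDeriv_mul,
      partialDeriv_mul, partialDeriv_mul]
    · ring
    all_goals fun_prop (disch := simp)
  all_goals
    intros
    fun_prop (disch := simp)

lemma norm_gradient_laplacian_mul_sub_le (hf : ContDiff ℝ ∞ f) (hη : ContDiff ℝ ∞ η) (x : ℝ^n)
    {a b c : ℝ} (ha : ∀ i, |∂[i] η x| ≤ a) (hb : ∀ i j, |∂[j] (∂[i] η) x| ≤ b)
    (hc : ∀ i j l, |∂[l] (∂[j] (∂[i] η)) x| ≤ c) :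
    ‖∇ (laplacian fun y => f y * η y) x - η x • ∇ (laplacian f) x‖
      ≤ 3 * n ^ 2 * (a * hessianNorm f x + b * ‖∇ f x‖ + c * |f x|) := by
  have hmul : ∀ {s t S T : ℝ}, |s| ≤ S → |t| ≤ T → |s * t| ≤ T * S := fun hs ht => by
    rw [abs_mul, mul_comm]
    exact mul_le_mul ht hs (abs_nonneg _) ((abs_nonneg _).trans ht)
  have hH := abs_partialDeriv_partialDeriv_le_hessianNorm f x
  have hG := abs_partialDeriv_le_norm_gradient f x
  suffices h : ∀ j, |(∇ (laplacian fun y => f y * η y) x - η x • ∇ (laplacian f) x) j|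
      ≤ n * (3 * (a * hessianNorm f x + b * ‖∇ f x‖ + c * |f x|)) from
    (norm_le_card_mul_of_abs_apply_le h).trans_eq (by ring)
  intro j
  have hsub : (∇ (laplacian fun y => f y * η y) x - η x • ∇ (laplacian f) x) j
      = ∂[j] (laplacian fun y => f y * η y) x - η x * ∂[j] (laplacian f) x := by
    simp [gradient_apply]
  rw [hsub, partialDeriv_laplacian_mul hf hη, add_sub_cancel_left]
  calc _ ≤ ∑ i, |∂[i] (∂[i] f) x * ∂[j] η x + 2 * (∂[j] (∂[i] f) x * ∂[i] η x)
        + 2 * (∂[i] f x * ∂[j] (∂[i] η) x) + ∂[j] f x * ∂[i] (∂[i] η) x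
        + f x * ∂[j] (∂[i] (∂[i] η)) x| := Finset.abs_sum_le_sum_abs _ _
    _ ≤ ∑ _i : Fin n, 3 * (a * hessianNorm f x + b * ‖∇ f x‖ + c * |f x|) := by
      gcongr with i
      have hHa := abs_le.mp (hmul (hH i i) (ha j))
      have hHa' := abs_le.mp (hmul (hH i j) (ha i))
      have hGb := abs_le.mp (hmul (hG i) (hb i j))
      have hGb' := abs_le.mp (hmul (hG j) (hb i i))
      have hfc := abs_le.mp (hmul le_rfl (hc i i j) : |f x * _| ≤ _)
      rw [abs_le]
      constructor <;> linarith
    _ = n * (3 * (a * hessianNorm f x + b * ‖∇ f x‖ + c * |f x|)) := by simp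

end ProductRule

section Cutoff

/-- `ζ` is a smooth cutoff function at length scale `1 / r`: each derivative costs a factor `r`. -/
structure IsCutoff (ζ : ℝ^n → ℝ) (r : ℝ) : Prop where
  contDiff : ContDiff ℝ ∞ ζ
  hasCompactSupport : HasCompactSupport ζ
  nonneg : ∀ x, 0 ≤ ζ x
  le_one : ∀ x, ζ x ≤ 1
  pos : 0 < r
  abs_partialDeriv_le : ∀ i x, |∂[i] ζ x| ≤ r
  abs_partialDeriv₂_le : ∀ i j x, |∂[j] (∂[i] ζ) x| ≤ r ^ 2
  abs_partialDeriv₃_le : ∀ i j l x, |∂[l] (∂[j] (∂[i] ζ)) x| ≤ r ^ 3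

namespace IsCutoff

variable {ζ : ℝ^n → ℝ} {r : ℝ}

lemma contDiff_pow (hζ : IsCutoff ζ r) (m : ℕ) : ContDiff ℝ ∞ fun x => ζ x ^ m :=
  hζ.contDiff.pow m

lemma hasCompactSupport_pow (hζ : IsCutoff ζ r) {m : ℕ} (hm : m ≠ 0) :
    HasCompactSupport fun x => ζ x ^ m :=
  hζ.hasCompactSupport.comp_left (g := fun t : ℝ => t ^ m) (by simp [hm])

lemma abs_partialDeriv_pow_le (hζ : IsCutoff ζ r) (m : ℕ) (i : Fin n) (x : ℝ^n) :
    |∂[i] (fun y => ζ y ^ (m + 1)) x| ≤ (m + 1) * (r * ζ x ^ m) := by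
  have hnonneg := hζ.nonneg x
  rw [partialDeriv_pow_succ (hζ.contDiff.differentiable (by simp)), abs_mul, abs_mul,
    abs_of_nonneg (by positivity : (0 : ℝ) ≤ m + 1), abs_of_nonneg (by positivity), mul_comm r]
  gcongr
  exact hζ.abs_partialDeriv_le i x

lemma partialDeriv_partialDeriv_pow (hζ : IsCutoff ζ r) (m : ℕ) (i j : Fin n) :
    ∂[j] (∂[i] fun y => ζ y ^ (m + 2)) = fun x => (m + 2) *
      (ζ x ^ (m + 1) * ∂[j] (∂[i] ζ) x + (m + 1) * (ζ x ^ m * (∂[i] ζ x * ∂[j] ζ x))) := by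
  have hsmooth := hζ.contDiff
  rw [partialDeriv_pow_succ, partialDeriv_const_mul, partialDeriv_mul, partialDeriv_pow_succ]
  · funext x
    push_cast
    ring
  all_goals fun_prop (disch := simp)

lemma partialDeriv₃_pow (hζ : IsCutoff ζ r) (m : ℕ) (i j l : Fin n) (x : ℝ^n) :
    ∂[l] (∂[j] (∂[i] fun y => ζ y ^ (m + 3))) x = (m + 3) *
      (ζ x ^ (m + 2) * ∂[l] (∂[j] (∂[i] ζ)) x
        + (m + 2) * (ζ x ^ (m + 1) * (∂[l] ζ x * ∂[j] (∂[i] ζ) x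
          + ∂[j] ζ x * ∂[l] (∂[i] ζ) x + ∂[i] ζ x * ∂[l] (∂[j] ζ) x))
        + (m + 2) * (m + 1) * (ζ x ^ m * (∂[i] ζ x * (∂[j] ζ x * ∂[l] ζ x)))) := by
  have hsmooth := hζ.contDiff
  rw [hζ.partialDeriv_partialDeriv_pow (m + 1), partialDeriv_const_mul, partialDeriv_add,
    partialDeriv_const_mul, partialDeriv_mul, partialDeriv_mul, partialDeriv_mul,
    partialDeriv_pow_succ, partialDeriv_pow_succ]
  · push_cast
    ring
  all_goals fun_prop (disch := simp)

lemma abs_partialDeriv₂_pow_le (hζ : IsCutoff ζ r) (m : ℕ) (i j : Fin n) (x : ℝ^n) :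
    |∂[j] (∂[i] fun y => ζ y ^ (m + 2)) x| ≤ (m + 2) ^ 2 * (r ^ 2 * ζ x ^ m) := by
  have hnonneg := hζ.nonneg x
  have hr := hζ.pos.le
  have hpow : ζ x ^ (m + 1) ≤ ζ x ^ m :=
    pow_le_pow_of_le_one hnonneg (hζ.le_one x) (by omega)
  rw [hζ.partialDeriv_partialDeriv_pow, abs_mul, abs_of_nonneg (by positivity : (0 : ℝ) ≤ m + 2)]
  calc (m + 2) * |ζ x ^ (m + 1) * ∂[j] (∂[i] ζ) x
          + (m + 1) * (ζ x ^ m * (∂[i] ζ x * ∂[j] ζ x))|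
      ≤ (m + 2) * (ζ x ^ m * r ^ 2 + (m + 1) * (ζ x ^ m * (r * r))) := by
        gcongr
        refine (abs_add_le _ _).trans ?_
        simp only [abs_mul, abs_of_nonneg (by positivity : (0 : ℝ) ≤ m + 1),
          abs_of_nonneg (pow_nonneg hnonneg _)]
        gcongr
        exacts [hζ.abs_partialDeriv₂_le i j x, hζ.abs_partialDeriv_le i x,
          hζ.abs_partialDeriv_le j x]
    _ = (m + 2) ^ 2 * (r ^ 2 * ζ x ^ m) := by ring

lemma abs_partialDeriv₃_pow_le (hζ : IsCutoff ζ r) (m : ℕ) (i j l : Fin n) (x : ℝ^n) :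
    |∂[l] (∂[j] (∂[i] fun y => ζ y ^ (m + 3))) x| ≤ (m + 3) ^ 3 * (r ^ 3 * ζ x ^ m) := by
  have hnonneg := hζ.nonneg x
  have hr := hζ.pos.le
  have hpow₁ : ζ x ^ (m + 1) ≤ ζ x ^ m :=
    pow_le_pow_of_le_one hnonneg (hζ.le_one x) (by omega)
  have hpow₂ : ζ x ^ (m + 2) ≤ ζ x ^ m :=
    pow_le_pow_of_le_one hnonneg (hζ.le_one x) (by omega)
  have hd := fun i => hζ.abs_partialDeriv_le i x
  have hd₂ := fun i j => hζ.abs_partialDeriv₂_le i j x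
  have hd₃ := hζ.abs_partialDeriv₃_le i j l x
  rw [hζ.partialDeriv₃_pow, abs_mul, abs_of_nonneg (by positivity : (0 : ℝ) ≤ m + 3)]
  calc (m + 3) * |_|
      ≤ (m + 3) * (ζ x ^ m * r ^ 3
          + (m + 2) * (ζ x ^ m * (r * r ^ 2 + r * r ^ 2 + r * r ^ 2))
          + (m + 2) * (m + 1) * (ζ x ^ m * (r * (r * r)))) := by
        gcongr
        refine (abs_add_three _ _ _).trans ?_
        simp only [abs_mul, abs_of_nonneg (by positivity : (0 : ℝ) ≤ m + 1),
          abs_of_nonneg (by positivity : (0 : ℝ) ≤ m + 2), abs_of_nonneg (pow_nonneg hnonneg _)]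
        gcongr
        · refine (abs_add_three _ _ _).trans ?_
          simp only [abs_mul]
          gcongr <;> apply_assumption
        all_goals apply_assumption
    _ = (m + 3) ^ 3 * (r ^ 3 * ζ x ^ m) := by ring

end IsCutoff

end Cutoff

section Interpolation

/-- The zeroth-order part of the jet of `f`, scaled by powers of `r` and `ζ` so that it has the
same homogeneity as `weightedGradLaplacian`. -/
def weightedValue (f ζ : ℝ^n → ℝ) (r : ℝ) (k : ℕ) (x : ℝ^n) : ℝ :=
  r ^ 3 * (ζ x ^ k * |f x|)

/-- The first-order analogue of `weightedValue`. -/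
def weightedGradient (f ζ : ℝ^n → ℝ) (r : ℝ) (k : ℕ) (x : ℝ^n) : ℝ :=
  r ^ 2 * (ζ x ^ (k + 1) * ‖∇ f x‖)

/-- The second-order analogue of `weightedValue`. -/
def weightedHessian (f ζ : ℝ^n → ℝ) (r : ℝ) (k : ℕ) (x : ℝ^n) : ℝ :=
  r * (ζ x ^ (k + 2) * hessianNorm f x)

/-- The length of `∇Δf`, localized by `ζ`; its square is the localized energy density. -/
def weightedGradLaplacian (f ζ : ℝ^n → ℝ) (k : ℕ) (x : ℝ^n) : ℝ :=
  ζ x ^ (k + 3) * ‖∇ (laplacian f) x‖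

/-- The total size of the jet of order at most two, which bounds the commutator of `∇Δ` with
multiplication by `ζ ^ (k + 3)`. -/
def weightedJet (f ζ : ℝ^n → ℝ) (r : ℝ) (k : ℕ) (x : ℝ^n) : ℝ :=
  weightedHessian f ζ r k x + weightedGradient f ζ r k x + weightedValue f ζ r k x

variable {f ζ : ℝ^n → ℝ} {r : ℝ} {k : ℕ}

namespace IsCutoff

lemma integrable_const_mul_pow_mul_sq (hζ : IsCutoff ζ r) {m : ℕ} (hm : m ≠ 0) (c : ℝ)
    {h : ℝ^n → ℝ} (hh : Continuous h) : Integrable fun x => (c * (ζ x ^ m * h x)) ^ 2 := by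
  have hcont := hζ.contDiff.continuous
  refine Continuous.integrable_of_hasCompactSupport (by fun_prop)
    ((hζ.hasCompactSupport_pow hm).mono fun x hx h0 => hx ?_)
  simp only at h0
  simp [h0]

lemma integrable_weightedValue_sq (hζ : IsCutoff ζ r) (hf : Continuous f) (hk : k ≠ 0) :
    Integrable fun x => weightedValue f ζ r k x ^ 2 :=
  hζ.integrable_const_mul_pow_mul_sq hk _ hf.abs

lemma integrable_weightedGradient_sq (hζ : IsCutoff ζ r) (hf : ContDiff ℝ ∞ f) :
    Integrable fun x => weightedGradient f ζ r k x ^ 2 :=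
  hζ.integrable_const_mul_pow_mul_sq (by omega) _ (by fun_prop)

lemma integrable_weightedHessian_sq (hζ : IsCutoff ζ r) (hf : ContDiff ℝ ∞ f) :
    Integrable fun x => weightedHessian f ζ r k x ^ 2 :=
  hζ.integrable_const_mul_pow_mul_sq (by omega) _ (by fun_prop)

lemma integrable_weightedGradLaplacian_sq (hζ : IsCutoff ζ r) (hf : ContDiff ℝ ∞ f) :
    Integrable fun x => weightedGradLaplacian f ζ k x ^ 2 := by
  simpa only [weightedGradLaplacian, one_mul] using
    hζ.integrable_const_mul_pow_mul_sq (m := k + 3) (by omega) 1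
      (h := fun x => ‖∇ (laplacian f) x‖) (by fun_prop)

end IsCutoff

lemma weightedJet_sq_le (f ζ : ℝ^n → ℝ) (r : ℝ) (k : ℕ) (x : ℝ^n) :
    weightedJet f ζ r k x ^ 2 ≤ 3 * (weightedHessian f ζ r k x ^ 2
      + weightedGradient f ζ r k x ^ 2 + weightedValue f ζ r k x ^ 2) := by
  unfold weightedJet
  nlinarith [sq_nonneg (weightedHessian f ζ r k x - weightedGradient f ζ r k x),
    sq_nonneg (weightedGradient f ζ r k x - weightedValue f ζ r k x),
    sq_nonneg (weightedHessian f ζ r k x - weightedValue f ζ r k x)]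

lemma IsCutoff.integrable_weightedJet_sq (hζ : IsCutoff ζ r) (hf : ContDiff ℝ ∞ f) (hk : k ≠ 0) :
    Integrable fun x => weightedJet f ζ r k x ^ 2 := by
  have hcont := hζ.contDiff.continuous
  have hbound : Integrable fun x => 3 * (weightedHessian f ζ r k x ^ 2
      + weightedGradient f ζ r k x ^ 2 + weightedValue f ζ r k x ^ 2) :=
    (((hζ.integrable_weightedHessian_sq hf).add (hζ.integrable_weightedGradient_sq hf)).add
      (hζ.integrable_weightedValue_sq hf.continuous hk)).const_mul 3
  refine hbound.mono' ?_ (.of_forall fun x => ?_)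
  · unfold weightedJet weightedHessian weightedGradient weightedValue
    exact Continuous.aestronglyMeasurable (by fun_prop)
  · simpa using weightedJet_sq_le f ζ r k x

/-- Here `g` is a divergence produced by an integration by parts, and `lo`, `mid`, `hi` are
derivatives of consecutive orders. -/
lemma integral_sq_le_of_sq_le_add_mul {α : Type*} [MeasurableSpace α] {μ : Measure α}
    {lo mid hi g : α → ℝ} {K δ : ℝ} (hlo : Integrable (fun x => lo x ^ 2) μ)
    (hmid : Integrable (fun x => mid x ^ 2) μ) (hhi : Integrable (fun x => hi x ^ 2) μ)
    (hg : Integrable g μ) (hg0 : ∫ x, g x ∂μ = 0)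
    (hle : ∀ x, mid x ^ 2 ≤ g x + K * (lo x * (hi x + mid x))) (hδ : 0 < δ) :
    ∫ x, mid x ^ 2 ∂μ ≤ δ * ∫ x, hi x ^ 2 ∂μ + (K ^ 2 / δ + K ^ 2) * ∫ x, lo x ^ 2 ∂μ := by
  have hpoint : ∀ x, mid x ^ 2 ≤
      2 * g x + (δ * hi x ^ 2 + (K ^ 2 / δ + K ^ 2) * lo x ^ 2) := fun x => by
    have hhigh : 2 * (K * lo x * hi x) ≤ δ * hi x ^ 2 + K ^ 2 / δ * lo x ^ 2 := by
      have : δ * hi x ^ 2 + K ^ 2 / δ * lo x ^ 2 - 2 * (K * lo x * hi x)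
          = (δ * hi x - K * lo x) ^ 2 / δ := by
        field_simp
        ring
      linarith [div_nonneg (sq_nonneg (δ * hi x - K * lo x)) hδ.le]
    linarith [hle x, sq_nonneg (mid x - K * lo x)]
  have hbound : Integrable (fun x => δ * hi x ^ 2 + (K ^ 2 / δ + K ^ 2) * lo x ^ 2) μ :=
    (hhi.const_mul _).add (hlo.const_mul _)
  calc ∫ x, mid x ^ 2 ∂μ
      ≤ ∫ x, 2 * g x + (δ * hi x ^ 2 + (K ^ 2 / δ + K ^ 2) * lo x ^ 2) ∂μ :=
        integral_mono hmid ((hg.const_mul _).add hbound) hpoint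
    _ = δ * ∫ x, hi x ^ 2 ∂μ + (K ^ 2 / δ + K ^ 2) * ∫ x, lo x ^ 2 ∂μ := by
        rw [integral_add (hg.const_mul _) hbound,
          integral_add (hhi.const_mul _) (hlo.const_mul _)]
        simp only [integral_const_mul, hg0, mul_zero, zero_add]

lemma divergence_mul_gradient_mul {η : ℝ^n → ℝ} (hf : ContDiff ℝ ∞ f) (hη : ContDiff ℝ ∞ η)
    (x : ℝ^n) :
    ∑ i, ∂[i] (fun y => f y * ∂[i] f y * η y) x
      = ‖∇ f x‖ ^ 2 * η x + f x * laplacian f x * η x + f x * ∑ i, ∂[i] f x * ∂[i] η x := by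
  rw [norm_gradient_sq, laplacian_eq_sum_partialDeriv hf, Finset.mul_sum, Finset.mul_sum,
    Finset.sum_mul, Finset.sum_mul, ← Finset.sum_add_distrib, ← Finset.sum_add_distrib]
  refine Finset.sum_congr rfl fun i _ => ?_
  rw [partialDeriv_mul, partialDeriv_mul]
  · ring
  all_goals fun_prop (disch := simp)

lemma divergence_hessian_gradient_mul {η : ℝ^n → ℝ} (hf : ContDiff ℝ ∞ f)
    (hη : ContDiff ℝ ∞ η) (x : ℝ^n) :
    ∑ j, ∂[j] (fun y => (∑ i, ∂[i] f y * ∂[j] (∂[i] f) y) * η y) x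
      = hessianNorm f x ^ 2 * η x + inner ℝ (∇ f x) (∇ (laplacian f) x) * η x
        + ∑ j, ∑ i, ∂[i] f x * ∂[j] (∂[i] f) x * ∂[j] η x := by
  have hlap : ∀ i, ∂[i] (laplacian f) x = ∑ j, ∂[j] (∂[j] (∂[i] f)) x := fun i => by
    rw [laplacian_eq_sum_partialDeriv hf, partialDeriv_sum]
    · refine Finset.sum_congr rfl fun j _ => ?_
      rw [partialDeriv_comm (contDiff_partialDeriv hf j), partialDeriv_comm hf]
    · intros
      fun_prop (disch := simp)
  simp only [hessianNorm_sq, inner_gradient_gradient, hlap, Finset.mul_sum]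
  rw [Finset.sum_comm, Finset.sum_comm (f := fun i j => ∂[i] f x * _), Finset.sum_mul,
    Finset.sum_mul, ← Finset.sum_add_distrib, ← Finset.sum_add_distrib]
  refine Finset.sum_congr rfl fun j _ => ?_
  have hsum : ∂[j] (fun y => ∑ i, ∂[i] f y * ∂[j] (∂[i] f) y) x
      = ∑ i, ∂[j] (∂[i] f) x ^ 2 + ∑ i, ∂[i] f x * ∂[j] (∂[j] (∂[i] f)) x := by
    rw [partialDeriv_sum, ← Finset.sum_add_distrib]
    · refine Finset.sum_congr rfl fun i _ => ?_
      rw [partialDeriv_mul] <;> [ring; fun_prop (disch := simp); fun_prop (disch := simp)]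
    · intros
      fun_prop (disch := simp)
  rw [partialDeriv_mul]
  · simp only [hsum, ← Finset.sum_mul]
    ring
  all_goals fun_prop (disch := simp)

lemma IsCutoff.weightedGradient_sq_le (hζ : IsCutoff ζ r) (hf : ContDiff ℝ ∞ f) (k : ℕ)
    (x : ℝ^n) :
    weightedGradient f ζ r k x ^ 2 ≤
      r ^ 4 * ∑ i, ∂[i] (fun y => f y * ∂[i] f y * ζ y ^ (2 * k + 2)) x
        + n * (2 * k + 2) * (weightedValue f ζ r k x *
          (weightedHessian f ζ r k x + weightedGradient f ζ r k x)) := by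
  have hnonneg := hζ.nonneg x
  have hcross : |∑ i, ∂[i] f x * ∂[i] (fun y => ζ y ^ (2 * k + 2)) x|
      ≤ n * (‖∇ f x‖ * ((2 * k + 2) * (r * ζ x ^ (2 * k + 1)))) := by
    calc _ ≤ ∑ i, |∂[i] f x * ∂[i] (fun y => ζ y ^ (2 * k + 2)) x| :=
          Finset.abs_sum_le_sum_abs _ _
      _ ≤ ∑ _i : Fin n, ‖∇ f x‖ * ((2 * k + 2) * (r * ζ x ^ (2 * k + 1))) := by
        gcongr with i
        rw [abs_mul]
        gcongr
        · exact abs_partialDeriv_le_norm_gradient f x i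
        · refine (hζ.abs_partialDeriv_pow_le (2 * k + 1) i x).trans_eq ?_
          push_cast
          ring
      _ = _ := by simp
  have hvalue : |f x * laplacian f x * ζ x ^ (2 * k + 2)
        + f x * ∑ i, ∂[i] f x * ∂[i] (fun y => ζ y ^ (2 * k + 2)) x|
      ≤ |f x| * (n * (2 * k + 2) * hessianNorm f x) * ζ x ^ (2 * k + 2)
        + |f x| * (n * (‖∇ f x‖ * ((2 * k + 2) * (r * ζ x ^ (2 * k + 1))))) := by
    refine (abs_add_le _ _).trans ?_
    rw [abs_mul, abs_mul, abs_mul, abs_of_nonneg (pow_nonneg hnonneg _)]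
    gcongr
    refine (abs_laplacian_le_hessianNorm hf x).trans ?_
    gcongr
    · exact hessianNorm_nonneg f x
    · exact le_mul_of_one_le_right (by positivity) (by linarith [(k.cast_nonneg : (0 : ℝ) ≤ k)])
  rw [divergence_mul_gradient_mul hf (hζ.contDiff_pow _)]
  unfold weightedGradient weightedValue weightedHessian
  linear_combination r ^ 4 * (neg_le_abs _).trans hvalue

lemma IsCutoff.weightedHessian_sq_le (hζ : IsCutoff ζ r) (hf : ContDiff ℝ ∞ f) (k : ℕ)
    (x : ℝ^n) :
    weightedHessian f ζ r k x ^ 2 ≤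
      r ^ 2 * ∑ j, ∂[j] (fun y => (∑ i, ∂[i] f y * ∂[j] (∂[i] f) y) * ζ y ^ (2 * k + 4)) x
        + (n ^ 2 * (2 * k + 4) + 1) * (weightedGradient f ζ r k x *
          (weightedGradLaplacian f ζ k x + weightedHessian f ζ r k x)) := by
  have hnonneg := hζ.nonneg x
  have hr := hζ.pos.le
  have hH := hessianNorm_nonneg f x
  have hcross : |∑ j, ∑ i, ∂[i] f x * ∂[j] (∂[i] f) x * ∂[j] (fun y => ζ y ^ (2 * k + 4)) x|
      ≤ n ^ 2 * (‖∇ f x‖ * hessianNorm f x * ((2 * k + 4) * (r * ζ x ^ (2 * k + 3)))) := by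
    calc _ ≤ ∑ j, ∑ i, |∂[i] f x * ∂[j] (∂[i] f) x * ∂[j] (fun y => ζ y ^ (2 * k + 4)) x| :=
          (Finset.abs_sum_le_sum_abs _ _).trans
            (Finset.sum_le_sum fun _ _ => Finset.abs_sum_le_sum_abs _ _)
      _ ≤ ∑ _j : Fin n, ∑ _i : Fin n,
          ‖∇ f x‖ * hessianNorm f x * ((2 * k + 4) * (r * ζ x ^ (2 * k + 3))) := by
        gcongr with j _ i
        rw [abs_mul, abs_mul]
        gcongr
        · exact abs_partialDeriv_le_norm_gradient f x i
        · exact abs_partialDeriv_partialDeriv_le_hessianNorm f x i j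
        · refine (hζ.abs_partialDeriv_pow_le (2 * k + 3) j x).trans_eq ?_
          push_cast
          ring
      _ = _ := by
        simp only [Finset.sum_const, Finset.card_univ, Fintype.card_fin, nsmul_eq_mul]
        ring
  have hinner : |inner ℝ (∇ f x) (∇ (laplacian f) x) * ζ x ^ (2 * k + 4)|
      ≤ ‖∇ f x‖ * ‖∇ (laplacian f) x‖ * ζ x ^ (2 * k + 4) := by
    rw [abs_mul, abs_of_nonneg (pow_nonneg hnonneg _)]
    gcongr
    exact abs_real_inner_le_norm _ _
  rw [divergence_hessian_gradient_mul hf (hζ.contDiff_pow _)]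
  have hvalue := (neg_le_abs _).trans ((abs_add_le _ _).trans (add_le_add hinner hcross))
  have hGL : 0 ≤ n ^ 2 * (2 * k + 4) *
      (weightedGradient f ζ r k x * weightedGradLaplacian f ζ k x) := by
    unfold weightedGradient weightedGradLaplacian
    positivity
  have hGH : 0 ≤ weightedGradient f ζ r k x * weightedHessian f ζ r k x := by
    unfold weightedGradient weightedHessian
    positivity
  unfold weightedGradient weightedGradLaplacian weightedHessian at *
  linear_combination r ^ 2 * hvalue + hGL + hGH

lemma IsCutoff.integral_weightedGradient_sq_le (hζ : IsCutoff ζ r) (hf : ContDiff ℝ ∞ f)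
    (hk : k ≠ 0) {δ : ℝ} (hδ : 0 < δ) :
    ∫ x, weightedGradient f ζ r k x ^ 2 ≤ δ * (∫ x, weightedHessian f ζ r k x ^ 2)
      + ((n * (2 * k + 2)) ^ 2 / δ + (n * (2 * k + 2)) ^ 2)
        * ∫ x, weightedValue f ζ r k x ^ 2 := by
  have hF : ∀ i, ContDiff ℝ ∞ fun y => f y * ∂[i] f y * ζ y ^ (2 * k + 2) := fun i => by
    have := hζ.contDiff
    fun_prop
  have hFc : ∀ i, HasCompactSupport fun y => f y * ∂[i] f y * ζ y ^ (2 * k + 2) :=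
    fun i => (hζ.hasCompactSupport_pow (by omega)).mul_left
  refine integral_sq_le_of_sq_le_add_mul (hζ.integrable_weightedValue_sq hf.continuous hk)
    (hζ.integrable_weightedGradient_sq hf) (hζ.integrable_weightedHessian_sq hf)
    ((integrable_divergence hF hFc).const_mul _) ?_ (hζ.weightedGradient_sq_le hf k) hδ
  rw [integral_const_mul, integral_divergence_eq_zero hF hFc, mul_zero]

lemma IsCutoff.integral_weightedHessian_sq_le (hζ : IsCutoff ζ r) (hf : ContDiff ℝ ∞ f)
    {δ : ℝ} (hδ : 0 < δ) :
    ∫ x, weightedHessian f ζ r k x ^ 2 ≤ δ * (∫ x, weightedGradLaplacian f ζ k x ^ 2)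
      + ((n ^ 2 * (2 * k + 4) + 1) ^ 2 / δ + (n ^ 2 * (2 * k + 4) + 1) ^ 2)
        * ∫ x, weightedGradient f ζ r k x ^ 2 := by
  have hF : ∀ j, ContDiff ℝ ∞ fun y =>
      (∑ i, ∂[i] f y * ∂[j] (∂[i] f) y) * ζ y ^ (2 * k + 4) := fun j => by
    have := hζ.contDiff
    fun_prop
  have hFc : ∀ j, HasCompactSupport fun y =>
      (∑ i, ∂[i] f y * ∂[j] (∂[i] f) y) * ζ y ^ (2 * k + 4) :=
    fun j => (hζ.hasCompactSupport_pow (by omega)).mul_left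
  refine integral_sq_le_of_sq_le_add_mul (hζ.integrable_weightedGradient_sq hf)
    (hζ.integrable_weightedHessian_sq hf) (hζ.integrable_weightedGradLaplacian_sq hf)
    ((integrable_divergence hF hFc).const_mul _) ?_ (hζ.weightedHessian_sq_le hf k) hδ
  rw [integral_const_mul, integral_divergence_eq_zero hF hFc, mul_zero]

/-- The two interpolation inequalities are chained by absorbing the Hessian: the weight given to
it in the first one is chosen after the constant of the second one. -/
lemma exists_integral_weightedJet_sq_le (n : ℕ) {k : ℕ} (hk : k ≠ 0) {δ : ℝ} (hδ : 0 < δ) :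
    ∃ C : ℝ, 0 ≤ C ∧ ∀ {f ζ : ℝ^n → ℝ} {r : ℝ}, ContDiff ℝ ∞ f → IsCutoff ζ r →
      ∫ x, weightedJet f ζ r k x ^ 2 ≤
        δ * (∫ x, weightedGradLaplacian f ζ k x ^ 2)
          + C * ∫ x, weightedValue f ζ r k x ^ 2 := by
  set A : ℝ := (n ^ 2 * (2 * k + 4) + 1) ^ 2 / (δ / 6) + (n ^ 2 * (2 * k + 4) + 1) ^ 2
  set ρ : ℝ := 1 / (2 * (A + 1))
  set B : ℝ := (n * (2 * k + 2)) ^ 2 / ρ + (n * (2 * k + 2)) ^ 2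
  have hA : 0 ≤ A := by positivity
  have hρ : 0 < ρ := by positivity
  refine ⟨3 * (2 * ((A + 1) * B) + 1), by positivity, fun {f ζ r} hf hζ => ?_⟩
  have hHint := hζ.integrable_weightedHessian_sq (k := k) hf
  have hGint := hζ.integrable_weightedGradient_sq (k := k) hf
  have hVint := hζ.integrable_weightedValue_sq (k := k) hf.continuous hk
  have hsum : Integrable fun x => weightedHessian f ζ r k x ^ 2 + weightedGradient f ζ r k x ^ 2 :=
    hHint.add hGint
  have hHess : ∫ x, weightedHessian f ζ r k x ^ 2 ≤
      δ / 6 * (∫ x, weightedGradLaplacian f ζ k x ^ 2) + A * ∫ x, weightedGradient f ζ r k x ^ 2 :=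
    hζ.integral_weightedHessian_sq_le hf (by positivity)
  have hGrad : ∫ x, weightedGradient f ζ r k x ^ 2 ≤
      ρ * (∫ x, weightedHessian f ζ r k x ^ 2) + B * ∫ x, weightedValue f ζ r k x ^ 2 :=
    hζ.integral_weightedGradient_sq_le hf hk hρ
  have hscaled := mul_le_mul_of_nonneg_left hGrad (by positivity : 0 ≤ A + 1)
  have hcancel : (A + 1) * (ρ * ∫ x, weightedHessian f ζ r k x ^ 2)
      = (∫ x, weightedHessian f ζ r k x ^ 2) / 2 := by
    simp only [ρ]
    field_simp
  have hG0 : 0 ≤ ∫ x, weightedGradient f ζ r k x ^ 2 := by positivity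
  calc ∫ x, weightedJet f ζ r k x ^ 2
      ≤ ∫ x, 3 * (weightedHessian f ζ r k x ^ 2 + weightedGradient f ζ r k x ^ 2
          + weightedValue f ζ r k x ^ 2) :=
        integral_mono (hζ.integrable_weightedJet_sq hf hk)
          ((hsum.add hVint).const_mul 3) (weightedJet_sq_le f ζ r k)
    _ = 3 * ((∫ x, weightedHessian f ζ r k x ^ 2) + (∫ x, weightedGradient f ζ r k x ^ 2)
          + ∫ x, weightedValue f ζ r k x ^ 2) := by
        rw [integral_const_mul, integral_add hsum hVint, integral_add hHint hGint]
    _ ≤ _ := by linarith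

lemma exists_mul_integral_weightedJet_sq_le (n : ℕ) {k : ℕ} (hk : k ≠ 0) {M δ : ℝ} (hM : 0 ≤ M)
    (hδ : 0 < δ) :
    ∃ C : ℝ, 0 ≤ C ∧ ∀ {f ζ : ℝ^n → ℝ} {r : ℝ}, ContDiff ℝ ∞ f → IsCutoff ζ r →
      M * ∫ x, weightedJet f ζ r k x ^ 2 ≤
        δ * (∫ x, weightedGradLaplacian f ζ k x ^ 2)
          + C * ∫ x, weightedValue f ζ r k x ^ 2 := by
  obtain ⟨C, hC, hjet⟩ := exists_integral_weightedJet_sq_le n hk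
    (by positivity : 0 < δ / (M + 1))
  refine ⟨M * C, by positivity, fun {f ζ r} hf hζ => ?_⟩
  have habsorb : M * (δ / (M + 1)) ≤ δ := by
    rw [mul_div_assoc', div_le_iff₀ (by positivity)]
    linarith
  have hscaled := mul_le_mul_of_nonneg_left (hjet hf hζ) hM
  have hE : 0 ≤ ∫ x, weightedGradLaplacian f ζ k x ^ 2 := by positivity
  linarith [mul_le_mul_of_nonneg_right habsorb hE]

lemma IsCutoff.norm_commutator_le (hζ : IsCutoff ζ r) (hf : ContDiff ℝ ∞ f) (k : ℕ) (x : ℝ^n) :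
    ‖∇ (laplacian fun y => f y * ζ y ^ (k + 3)) x - ζ x ^ (k + 3) • ∇ (laplacian f) x‖
      ≤ 3 * n ^ 2 * (k + 3) ^ 3 * weightedJet f ζ r k x := by
  have hnonneg := hζ.nonneg x
  have hr := hζ.pos.le
  have hk : (1 : ℝ) ≤ k + 3 := by linarith [(k.cast_nonneg : (0 : ℝ) ≤ k)]
  have hfirst : ∀ i, |∂[i] (fun y => ζ y ^ (k + 3)) x| ≤ (k + 3) ^ 3 * (r * ζ x ^ (k + 2)) :=
    fun i => (hζ.abs_partialDeriv_pow_le (k + 2) i x).trans <| by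
      gcongr
      push_cast
      linarith [le_self_pow₀ hk (by norm_num : 3 ≠ 0)]
  have hsecond : ∀ i j, |∂[j] (∂[i] fun y => ζ y ^ (k + 3)) x|
      ≤ (k + 3) ^ 3 * (r ^ 2 * ζ x ^ (k + 1)) :=
    fun i j => (hζ.abs_partialDeriv₂_pow_le (k + 1) i j x).trans <| by
      gcongr
      push_cast
      rw [show (k : ℝ) + 1 + 2 = k + 3 by ring]
      exact pow_le_pow_right₀ hk (by norm_num)
  refine (norm_gradient_laplacian_mul_sub_le hf (hζ.contDiff_pow _) x hfirst hsecond
    fun i j l => hζ.abs_partialDeriv₃_pow_le k i j l x).trans_eq ?_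
  unfold weightedJet weightedHessian weightedGradient weightedValue
  ring

lemma exists_integral_norm_gradient_laplacian_mul_pow_sq_le (n : ℕ) {k : ℕ} (hk : k ≠ 0) {δ : ℝ}
    (hδ : 0 < δ) :
    ∃ C : ℝ, 0 ≤ C ∧ ∀ {f ζ : ℝ^n → ℝ} {r : ℝ}, ContDiff ℝ ∞ f → IsCutoff ζ r →
      ∫ x, ‖∇ (laplacian fun y => f y * ζ y ^ (k + 3)) x‖ ^ 2 ≤
        (1 + δ) * (∫ x, weightedGradLaplacian f ζ k x ^ 2)
          + C * ∫ x, weightedValue f ζ r k x ^ 2 := by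
  set K : ℝ := 3 * n ^ 2 * (k + 3) ^ 3
  set M : ℝ := (1 + 2 / δ) * K ^ 2
  obtain ⟨C, hC, hjet⟩ := exists_mul_integral_weightedJet_sq_le n hk
    (by positivity : 0 ≤ M) (half_pos hδ)
  refine ⟨C, hC, fun {f ζ r} hf hζ => ?_⟩
  have hpoint : ∀ x, ‖∇ (laplacian fun y => f y * ζ y ^ (k + 3)) x‖ ^ 2 ≤
      (1 + δ / 2) * weightedGradLaplacian f ζ k x ^ 2 + M * weightedJet f ζ r k x ^ 2 :=
    fun x => by
    have hnorm : ‖∇ (laplacian fun y => f y * ζ y ^ (k + 3)) x‖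
        ≤ weightedGradLaplacian f ζ k x + K * weightedJet f ζ r k x := by
      have := norm_le_norm_add_norm_sub' (∇ (laplacian fun y => f y * ζ y ^ (k + 3)) x)
        (ζ x ^ (k + 3) • ∇ (laplacian f) x)
      rw [norm_smul, Real.norm_of_nonneg (pow_nonneg (hζ.nonneg x) _)] at this
      exact this.trans (add_le_add_right (hζ.norm_commutator_le hf k x) _)
    have hsquare : (weightedGradLaplacian f ζ k x + K * weightedJet f ζ r k x) ^ 2
        = (1 + δ / 2) * weightedGradLaplacian f ζ k x ^ 2 + M * weightedJet f ζ r k x ^ 2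
          - (δ / 2 * weightedGradLaplacian f ζ k x - K * weightedJet f ζ r k x) ^ 2 / (δ / 2) := by
      simp only [M]
      field_simp
      ring
    have hrest : 0 ≤ (δ / 2 * weightedGradLaplacian f ζ k x - K * weightedJet f ζ r k x) ^ 2
        / (δ / 2) := by positivity
    linarith [pow_le_pow_left₀ (norm_nonneg _) hnorm 2]
  have hGLint := (hζ.integrable_weightedGradLaplacian_sq (k := k) hf).const_mul (1 + δ / 2)
  have hJint := (hζ.integrable_weightedJet_sq hf hk).const_mul M
  calc ∫ x, ‖∇ (laplacian fun y => f y * ζ y ^ (k + 3)) x‖ ^ 2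
      ≤ ∫ x, (1 + δ / 2) * weightedGradLaplacian f ζ k x ^ 2 + M * weightedJet f ζ r k x ^ 2 :=
        integral_mono_of_nonneg (.of_forall fun x => sq_nonneg _) (hGLint.add hJint)
          (.of_forall hpoint)
    _ = (1 + δ / 2) * (∫ x, weightedGradLaplacian f ζ k x ^ 2)
          + M * ∫ x, weightedJet f ζ r k x ^ 2 := by
        rw [integral_add hGLint hJint, integral_const_mul, integral_const_mul]
    _ ≤ _ := by linarith [hjet hf hζ]

lemma IsCutoff.abs_inner_gradient_laplacian_mul_pow_sub_le (hζ : IsCutoff ζ r)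
    (hf : ContDiff ℝ ∞ f) (k : ℕ) (x : ℝ^n) :
    |inner ℝ (∇ (laplacian f) x) (∇ (laplacian fun y => f y * ζ y ^ (2 * k + 6)) x)
        - weightedGradLaplacian f ζ k x ^ 2|
      ≤ 3 * n ^ 2 * (2 * k + 6) ^ 3 * (weightedGradLaplacian f ζ k x * weightedJet f ζ r k x) := by
  have hcomm := hζ.norm_commutator_le hf (2 * k + 3) x
  have hjet : weightedJet f ζ r (2 * k + 3) x = ζ x ^ (k + 3) * weightedJet f ζ r k x := by
    unfold weightedJet weightedHessian weightedGradient weightedValue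
    ring
  have hsplit : inner ℝ (∇ (laplacian f) x) (∇ (laplacian fun y => f y * ζ y ^ (2 * k + 6)) x)
        - weightedGradLaplacian f ζ k x ^ 2
      = inner ℝ (∇ (laplacian f) x) (∇ (laplacian fun y => f y * ζ y ^ (2 * k + 6)) x
          - ζ x ^ (2 * k + 6) • ∇ (laplacian f) x) := by
    rw [inner_sub_right, real_inner_smul_right, real_inner_self_eq_norm_sq]
    unfold weightedGradLaplacian
    ring
  calc _ ≤ ‖∇ (laplacian f) x‖ * (3 * n ^ 2 * ((2 * k + 3 : ℕ) + 3) ^ 3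
          * weightedJet f ζ r (2 * k + 3) x) := by
        rw [hsplit]
        refine (abs_real_inner_le_norm _ _).trans ?_
        gcongr
    _ = _ := by
        rw [hjet]
        unfold weightedGradLaplacian
        push_cast
        ring

lemma exists_abs_integral_inner_gradient_laplacian_mul_pow_sub_le (n : ℕ) {k : ℕ} (hk : k ≠ 0)
    {δ : ℝ} (hδ : 0 < δ) :
    ∃ C : ℝ, 0 ≤ C ∧ ∀ {f ζ : ℝ^n → ℝ} {r : ℝ}, ContDiff ℝ ∞ f → IsCutoff ζ r →
      |(∫ x, inner ℝ (∇ (laplacian f) x) (∇ (laplacian fun y => f y * ζ y ^ (2 * k + 6)) x))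
          - ∫ x, weightedGradLaplacian f ζ k x ^ 2| ≤
        δ * (∫ x, weightedGradLaplacian f ζ k x ^ 2)
          + C * ∫ x, weightedValue f ζ r k x ^ 2 := by
  set K : ℝ := 3 * n ^ 2 * (2 * k + 6) ^ 3
  obtain ⟨C, hC, hjet⟩ := exists_mul_integral_weightedJet_sq_le n hk
    (by positivity : 0 ≤ K ^ 2 / (2 * δ)) (half_pos hδ)
  refine ⟨C, hC, fun {f ζ r} hf hζ => ?_⟩
  have hpoint : ∀ x,
      |inner ℝ (∇ (laplacian f) x) (∇ (laplacian fun y => f y * ζ y ^ (2 * k + 6)) x)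
          - weightedGradLaplacian f ζ k x ^ 2|
        ≤ δ / 2 * weightedGradLaplacian f ζ k x ^ 2
          + K ^ 2 / (2 * δ) * weightedJet f ζ r k x ^ 2 := fun x => by
    refine (hζ.abs_inner_gradient_laplacian_mul_pow_sub_le hf k x).trans ?_
    have hsquare : δ / 2 * weightedGradLaplacian f ζ k x ^ 2
          + K ^ 2 / (2 * δ) * weightedJet f ζ r k x ^ 2
          - K * (weightedGradLaplacian f ζ k x * weightedJet f ζ r k x)
        = (δ * weightedGradLaplacian f ζ k x - K * weightedJet f ζ r k x) ^ 2 / (2 * δ) := by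
      field_simp
      ring
    have hrest : 0 ≤ (δ * weightedGradLaplacian f ζ k x - K * weightedJet f ζ r k x) ^ 2
        / (2 * δ) := by positivity
    linarith
  have hζ' := hζ.contDiff
  have hIint : Integrable fun x =>
      inner ℝ (∇ (laplacian f) x) (∇ (laplacian fun y => f y * ζ y ^ (2 * k + 6)) x) := by
    have hsupp : HasCompactSupport fun y => f y * ζ y ^ (2 * k + 6) :=
      (hζ.hasCompactSupport_pow (by omega)).mul_left
    refine Continuous.integrable_of_hasCompactSupport (by fun_prop)
      ((hasCompactSupport_gradient (hasCompactSupport_laplacian hsupp)).mono fun x hx h0 => hx ?_)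
    simp [h0]
  have hGLint := hζ.integrable_weightedGradLaplacian_sq (k := k) hf
  have hJint := (hζ.integrable_weightedJet_sq hf hk).const_mul (K ^ 2 / (2 * δ))
  rw [← integral_sub hIint hGLint]
  calc _ ≤ ∫ x, δ / 2 * weightedGradLaplacian f ζ k x ^ 2
          + K ^ 2 / (2 * δ) * weightedJet f ζ r k x ^ 2 :=
        abs_integral_le_integral_abs.trans (integral_mono (hIint.sub hGLint).abs
          ((hGLint.const_mul _).add hJint) hpoint)
    _ = δ / 2 * (∫ x, weightedGradLaplacian f ζ k x ^ 2)
          + K ^ 2 / (2 * δ) * ∫ x, weightedJet f ζ r k x ^ 2 := by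
        rw [integral_add (hGLint.const_mul _) hJint, integral_const_mul, integral_const_mul]
    _ ≤ _ := by linarith [hjet hf hζ]

end Interpolation

section BallCutoff

/-- A smooth bump function equal to `1` on the unit ball and supported in the ball of radius `2`;
all the cutoffs used below are dilates of it. -/
def unitBump (n : ℕ) : ContDiffBump (0 : ℝ^n) := ⟨1, 2, one_pos, one_lt_two⟩

/-- The cutoff function equal to `1` on the ball of radius `R` and to `0` off the ball of radius
`2 * R`. -/
def ballCutoff (R : ℝ) (x : ℝ^n) : ℝ := unitBump n (R⁻¹ • x)

variable {R : ℝ} {x : ℝ^n} {F : ℝ^n → ℝ}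

lemma ballCutoff_eq_one (hR : 0 < R) (hx : ‖x‖ ≤ R) : ballCutoff R x = 1 := by
  refine (unitBump n).one_of_mem_closedBall ?_
  rw [mem_closedBall_zero_iff, norm_smul, norm_inv, Real.norm_of_nonneg hR.le,
    inv_mul_le_iff₀ hR]
  simpa [unitBump] using hx

lemma ballCutoff_eq_zero (hR : 0 < R) (hx : 2 * R ≤ ‖x‖) : ballCutoff R x = 0 := by
  refine (unitBump n).zero_of_le_dist ?_
  rw [dist_zero_right, norm_smul, norm_inv, Real.norm_of_nonneg hR.le, le_inv_mul_iff₀ hR]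
  simpa [unitBump, mul_comm] using hx

lemma exists_forall_abs_le_of_hasCompactSupport {ι X : Type*} [Finite ι] [TopologicalSpace X]
    {F : ι → X → ℝ} (hF : ∀ a, Continuous (F a)) (hFc : ∀ a, HasCompactSupport (F a)) :
    ∃ C, ∀ a x, |F a x| ≤ C := by
  choose C hC using fun a => (hFc a).exists_bound_of_continuous (hF a)
  obtain ⟨B, hB⟩ := Finite.exists_le C
  exact ⟨B, fun a x => (hC a x).trans (hB a)⟩

lemma exists_abs_partialDeriv_le {f : ℝ^n → ℝ} (hf : ContDiff ℝ ∞ f) (hfc : HasCompactSupport f) :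
    ∃ c, 1 ≤ c ∧ (∀ i x, |∂[i] f x| ≤ c) ∧ (∀ i j x, |∂[j] (∂[i] f) x| ≤ c) ∧
      ∀ i j l x, |∂[l] (∂[j] (∂[i] f)) x| ≤ c := by
  have hfc₁ := hasCompactSupport_partialDeriv hfc
  have hfc₂ := fun i => hasCompactSupport_partialDeriv (hfc₁ i)
  obtain ⟨a, ha⟩ := exists_forall_abs_le_of_hasCompactSupport (F := fun i => ∂[i] f)
    (fun i => by fun_prop) hfc₁
  obtain ⟨b, hb⟩ := exists_forall_abs_le_of_hasCompactSupport
    (F := fun a : Fin n × Fin n => ∂[a.2] (∂[a.1] f)) (fun a => by fun_prop)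
    (fun a => hfc₂ a.1 a.2)
  obtain ⟨c, hc⟩ := exists_forall_abs_le_of_hasCompactSupport
    (F := fun a : Fin n × Fin n × Fin n => ∂[a.2.2] (∂[a.2.1] (∂[a.1] f)))
    (fun a => by fun_prop)
    (fun a => hasCompactSupport_partialDeriv (hfc₂ a.1 a.2.1) a.2.2)
  exact ⟨max 1 (max a (max b c)), le_max_left _ _, fun i x => by simp [ha i x],
    fun i j x => by simp [hb (i, j) x], fun i j l x => by simp [hc (i, j, l) x]⟩

lemma exists_isCutoff_ballCutoff (n : ℕ) :
    ∃ c : ℝ, ∀ {R : ℝ}, 0 < R → IsCutoff (ballCutoff (n := n) R) (c / R) := by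
  have hb : ContDiff ℝ ∞ (unitBump n) := (unitBump n).contDiff
  obtain ⟨c, hc1, hc₁, hc₂, hc₃⟩ := exists_abs_partialDeriv_le hb (unitBump n).hasCompactSupport
  refine ⟨c, fun {R} hR => ?_⟩
  have hR' : 0 < R⁻¹ := inv_pos.2 hR
  have hD₁ : ∀ i, ∂[i] (ballCutoff (n := n) R) = fun x => R⁻¹ * ∂[i] (unitBump n) (R⁻¹ • x) :=
    fun i => partialDeriv_comp_smul _ _ i
  have hD₂ : ∀ i j, ∂[j] (∂[i] (ballCutoff (n := n) R))
      = fun x => R⁻¹ * (R⁻¹ * ∂[j] (∂[i] (unitBump n)) (R⁻¹ • x)) := fun i j => by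
    rw [hD₁, partialDeriv_const_mul (by fun_prop (disch := simp)), partialDeriv_comp_smul]
  have hD₃ : ∀ i j l, ∂[l] (∂[j] (∂[i] (ballCutoff (n := n) R)))
      = fun x => R⁻¹ * (R⁻¹ * (R⁻¹ * ∂[l] (∂[j] (∂[i] (unitBump n))) (R⁻¹ • x))) :=
    fun i j l => by
    rw [hD₂, partialDeriv_const_mul (by fun_prop (disch := simp)),
      partialDeriv_const_mul (by fun_prop (disch := simp)), partialDeriv_comp_smul]
  refine ⟨hb.comp (contDiff_const_smul R⁻¹), ?_, fun x => (unitBump n).nonneg,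
    fun x => (unitBump n).le_one, div_pos (one_pos.trans_le hc1) hR, fun i x => ?_, fun i j x => ?_,
    fun i j l x => ?_⟩
  · exact (unitBump n).hasCompactSupport.comp_homeomorph (Homeomorph.smulOfNeZero R⁻¹ hR'.ne')
  · rw [hD₁, abs_mul, abs_of_pos hR', div_eq_inv_mul]
    gcongr
    exact hc₁ i _
  · have := (hc₂ i j (R⁻¹ • x)).trans (le_self_pow₀ hc1 two_ne_zero)
    rw [hD₂, abs_mul, abs_mul, abs_of_pos hR', div_eq_inv_mul, mul_pow, sq R⁻¹, mul_assoc]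
    gcongr
  · have := (hc₃ i j l (R⁻¹ • x)).trans (le_self_pow₀ hc1 three_ne_zero)
    rw [hD₃, abs_mul, abs_mul, abs_mul, abs_of_pos hR', div_eq_inv_mul, mul_pow, pow_succ R⁻¹,
      sq R⁻¹, mul_assoc, mul_assoc]
    gcongr

/-- A constant for which `ballCutoff R` is a cutoff at length scale `R / cutoffConst n`, for all
`R > 0`. -/
def cutoffConst (n : ℕ) : ℝ := (exists_isCutoff_ballCutoff n).choose

lemma isCutoff_ballCutoff (hR : 0 < R) : IsCutoff (ballCutoff (n := n) R) (cutoffConst n / R) :=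
  (exists_isCutoff_ballCutoff n).choose_spec hR

lemma exists_rpow_mul_volume_closedBall_le {α : ℝ} (hα : n ≤ α) :
    ∃ V : ℝ, 0 < V ∧ ∀ R, 1 ≤ R → (cutoffConst n / R) ^ α
      * volume.real (Metric.closedBall (0 : ℝ^n) (2 * R)) ≤ V := by
  have hc : 0 < cutoffConst n := by simpa using (isCutoff_ballCutoff (n := n) one_pos).pos
  set b := volume.real (Metric.ball (0 : ℝ^n) 1)
  refine ⟨cutoffConst n ^ α * 2 ^ n * b + 1, by positivity, fun R hR => ?_⟩
  have hR0 : 0 < R := one_pos.trans_le hR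
  have hRα : R ^ n ≤ R ^ α := by
    rw [← Real.rpow_natCast]
    exact Real.rpow_le_rpow_of_exponent_le hR hα
  rw [Measure.addHaar_real_closedBall _ _ (by positivity), finrank_euclideanSpace_fin,
    Real.div_rpow hc.le hR0.le, mul_pow]
  calc cutoffConst n ^ α / R ^ α * (2 ^ n * R ^ n * b)
      = cutoffConst n ^ α * 2 ^ n * b * (R ^ n / R ^ α) := by ring
    _ ≤ cutoffConst n ^ α * 2 ^ n * b * 1 := by
        gcongr
        exact div_le_one_of_le₀ hRα (by positivity)
    _ ≤ _ := by linarith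

lemma tendsto_integral_ballCutoff_pow_mul (hF : Integrable F) (m : ℕ) :
    Tendsto (fun R => ∫ x, ballCutoff R x ^ m * F x) atTop (nhds (∫ x, F x)) := by
  refine tendsto_integral_filter_of_dominated_convergence (fun x => ‖F x‖) ?_ ?_ hF.norm ?_
  · filter_upwards [eventually_gt_atTop 0] with R hR
    exact ((isCutoff_ballCutoff hR).contDiff_pow m).continuous.aestronglyMeasurable.mul
      hF.aestronglyMeasurable
  · filter_upwards [eventually_gt_atTop 0] with R hR
    have hζ := isCutoff_ballCutoff (n := n) hR
    refine .of_forall fun x => ?_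
    rw [norm_mul, Real.norm_of_nonneg (pow_nonneg (hζ.nonneg x) _)]
    exact mul_le_of_le_one_left (norm_nonneg _) (pow_le_one₀ (hζ.nonneg x) (hζ.le_one x))
  · refine .of_forall fun x => tendsto_const_nhds.congr' ?_
    filter_upwards [eventually_gt_atTop 0, eventually_ge_atTop ‖x‖] with R hR hx
    rw [ballCutoff_eq_one hR hx, one_pow, one_mul]

lemma integrable_of_integral_ballCutoff_pow_mul_le (hF : Continuous F) (hF0 : ∀ x, 0 ≤ F x)
    {m : ℕ} (hm : m ≠ 0) {C : ℝ} (hC : ∀ R, 1 ≤ R → ∫ x, ballCutoff R x ^ m * F x ≤ C) :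
    Integrable F := by
  have hcover : AECover volume atTop fun R => Metric.closedBall (0 : ℝ^n) R :=
    aecover_closedBall tendsto_id
  refine hcover.integrable_of_integral_bounded_of_nonneg_ae C
    (fun R => hF.continuousOn.integrableOn_compact (isCompact_closedBall _ _))
    (.of_forall hF0) ?_
  filter_upwards [eventually_ge_atTop 1] with R hR
  have hR0 : 0 < R := one_pos.trans_le hR
  have hζ := isCutoff_ballCutoff (n := n) hR0
  have hζc := hζ.contDiff.continuous
  calc ∫ x in Metric.closedBall 0 R, F x
      = ∫ x in Metric.closedBall 0 R, ballCutoff R x ^ m * F x := by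
        refine setIntegral_congr_fun Metric.isClosed_closedBall.measurableSet fun x hx => ?_
        simp [ballCutoff_eq_one hR0 (mem_closedBall_zero_iff.1 hx)]
    _ ≤ ∫ x, ballCutoff R x ^ m * F x :=
        setIntegral_le_integral
          (Continuous.integrable_of_hasCompactSupport (by fun_prop)
            (hζ.hasCompactSupport_pow hm).mul_right)
          (.of_forall fun x => mul_nonneg (pow_nonneg (hζ.nonneg x) _) (hF0 x))
    _ ≤ C := hC R hR

end BallCutoff

section LowerOrderTerm

lemma exists_mul_le_mul_rpow_add_mul_rpow {p q : ℝ} (hpq : p.HolderConjugate q) {ε : ℝ}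
    (hε : 0 < ε) :
    ∃ C : ℝ, 0 < C ∧ ∀ a b : ℝ, 0 ≤ a → 0 ≤ b → a * b ≤ ε * a ^ p + C * b ^ q := by
  set s := ε ^ p⁻¹
  have hs : 0 < s := by positivity
  refine ⟨s⁻¹ ^ q, by positivity, fun a b ha hb => ?_⟩
  calc a * b = (s * a) * (s⁻¹ * b) := by field_simp
    _ ≤ (s * a) ^ p / p + (s⁻¹ * b) ^ q / q :=
        Real.young_inequality_of_nonneg (by positivity) (by positivity) hpq
    _ ≤ (s * a) ^ p + (s⁻¹ * b) ^ q :=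
        add_le_add (div_le_self (by positivity) hpq.lt.le)
          (div_le_self (by positivity) hpq.symm.lt.le)
    _ = ε * a ^ p + s⁻¹ ^ q * b ^ q := by
        rw [Real.mul_rpow hs.le ha, Real.mul_rpow (by positivity) hb,
          Real.rpow_inv_rpow hε.le hpq.ne_zero]

variable {q : ℝ}

lemma holderConjugate_half_div_sub_two (hq : 2 < q) : (q / 2).HolderConjugate (q / (q - 2)) := by
  have := sub_pos.2 hq
  refine Real.holderConjugate_iff.2 ⟨by linarith, ?_⟩
  field_simp
  ring

lemma sq_rpow_half {t : ℝ} (ht : 0 ≤ t) (q : ℝ) : (t ^ 2) ^ (q / 2) = t ^ q := by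
  rw [← Real.rpow_natCast_mul ht]
  congr 1
  push_cast
  ring

lemma pow_six_rpow_div_sub_two {r : ℝ} (hr : 0 ≤ r) (q : ℝ) :
    (r ^ 6) ^ (q / (q - 2)) = r ^ (6 * q / (q - 2)) := by
  rw [← Real.rpow_natCast_mul hr]
  congr 1
  push_cast
  ring

lemma pow_mul_rpow_le {k : ℕ} (hk : 6 ≤ k * (q - 2)) {z t : ℝ} (hz : 0 ≤ z)
    (hz1 : z ≤ 1) (ht : 0 ≤ t) : (z ^ k * t) ^ q ≤ z ^ (2 * k + 6) * t ^ q := by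
  rw [Real.mul_rpow (by positivity) ht, ← Real.rpow_natCast_mul hz, ← Real.rpow_natCast]
  refine mul_le_mul_of_nonneg_right ?_ (by positivity)
  refine Real.rpow_le_rpow_of_exponent_ge' hz hz1 (by positivity) ?_
  push_cast
  linarith

lemma natCast_le_six_mul_div_sub_two (hq : 2 < q) {n : ℕ} (hqn : ((n : ℝ) - 6) * q ≤ 2 * n) :
    (n : ℝ) ≤ 6 * q / (q - 2) := by
  rw [le_div_iff₀ (by linarith)]
  linarith

lemma integral_le_integral_add_mul_measureReal {α : Type*} [MeasurableSpace α] {μ : Measure α}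
    {F G : α → ℝ} {s : Set α} {c : ℝ} (hs : MeasurableSet s) (hμs : μ s ≠ ⊤)
    (hF : Integrable F μ) (hG : Integrable G μ) (hle : ∀ x ∈ s, F x ≤ G x + c)
    (hle' : ∀ x ∉ s, F x ≤ G x) :
    ∫ x, F x ∂μ ≤ ∫ x, G x ∂μ + c * μ.real s := by
  have hind : Integrable (s.indicator fun _ => c) μ :=
    (integrable_indicator_iff hs).2 (integrableOn_const hμs)
  calc ∫ x, F x ∂μ ≤ ∫ x, G x + s.indicator (fun _ => c) x ∂μ := by
        refine integral_mono hF (hG.add hind) fun x => ?_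
        by_cases hx : x ∈ s
        · simpa [hx] using hle x hx
        · simpa [hx] using hle' x hx
    _ = ∫ x, G x ∂μ + c * μ.real s := by
        rw [integral_add hG hind, integral_indicator hs, setIntegral_const, smul_eq_mul, mul_comm c]

lemma tendsto_integral_min_mul {α ι : Type*} [MeasurableSpace α] {μ : Measure α} {l : Filter ι}
    [l.IsCountablyGenerated] {G H : α → ℝ} {c : ι → ℝ} (hG : Integrable G μ)
    (hH : AEStronglyMeasurable H μ) (hG0 : ∀ x, 0 ≤ G x) (hH0 : ∀ x, 0 ≤ H x)
    (hc0 : ∀ i, 0 ≤ c i) (hc : Tendsto c l (nhds 0)) :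
    Tendsto (fun i => ∫ x, min (G x) (c i * H x) ∂μ) l (nhds 0) := by
  rw [← integral_zero α ℝ (μ := μ)]
  refine tendsto_integral_filter_of_dominated_convergence G ?_ ?_ hG ?_
  · exact .of_forall fun i => hG.aestronglyMeasurable.inf (hH.const_mul (c i))
  · refine .of_forall fun i => .of_forall fun x => ?_
    rw [Real.norm_of_nonneg (le_min (hG0 x) (mul_nonneg (hc0 i) (hH0 x)))]
    exact min_le_left _ _
  · refine .of_forall fun x => ?_
    simpa [hG0 x] using (tendsto_const_nhds (x := G x)).min (hc.mul_const (H x))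

variable {k : ℕ} {v F : ℝ^n → ℝ} {ε R : ℝ}

lemma weightedValue_sq_eq (f ζ : ℝ^n → ℝ) (r : ℝ) (k : ℕ) (x : ℝ^n) :
    weightedValue f ζ r k x ^ 2 = (ζ x ^ k * |f x|) ^ 2 * r ^ 6 := by
  unfold weightedValue
  ring

lemma weightedValue_ballCutoff_eq_zero (hk : k ≠ 0) (hR : 0 < R) (v : ℝ^n → ℝ) (r : ℝ) {x : ℝ^n}
    (hx : x ∉ Metric.closedBall 0 (2 * R)) : weightedValue v (ballCutoff R) r k x = 0 := by
  rw [mem_closedBall_zero_iff, not_le] at hx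
  simp [weightedValue, ballCutoff_eq_zero hR hx.le, hk]

lemma exists_natCast_six_le_mul_sub_two (hq : 2 < q) : ∃ k : ℕ, 6 ≤ k * (q - 2) := by
  obtain ⟨k, hk⟩ := exists_nat_ge (6 / (q - 2))
  exact ⟨k, (div_le_iff₀ (sub_pos.2 hq)).1 hk⟩

lemma ne_zero_of_six_le_mul_sub_two (hk : 6 ≤ k * (q - 2)) : k ≠ 0 := by
  rintro rfl
  norm_num at hk

/-- Criticality or subcriticality enters here only: it keeps the remainder of Young's inequality,
of order `R ^ n / R ^ (6 * q / (q - 2))`, bounded. -/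
lemma exists_integral_weightedValue_ballCutoff_sq_le (hq : 2 < q)
    (hqn : ((n : ℝ) - 6) * q ≤ 2 * n) (hk : 6 ≤ k * (q - 2)) (hv : Continuous v)
    (hF : Continuous F) (hvF : ∀ x, |v x| ^ q ≤ F x) (hε : 0 < ε) :
    ∃ A : ℝ, ∀ R, 1 ≤ R →
      ∫ x, weightedValue v (ballCutoff R) (cutoffConst n / R) k x ^ 2
        ≤ ε * (∫ x, ballCutoff R x ^ (2 * k + 6) * F x) + A := by
  obtain ⟨C, hC, hyoung⟩ := exists_mul_le_mul_rpow_add_mul_rpow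
    (holderConjugate_half_div_sub_two hq) hε
  obtain ⟨V, -, hvol⟩ := exists_rpow_mul_volume_closedBall_le
    (natCast_le_six_mul_div_sub_two hq hqn)
  refine ⟨C * V, fun R hR => ?_⟩
  have hR0 : 0 < R := one_pos.trans_le hR
  have hk0 := ne_zero_of_six_le_mul_sub_two hk
  have hζ := isCutoff_ballCutoff (n := n) hR0
  have hζc := hζ.contDiff.continuous
  have hFint : Integrable fun x => ballCutoff R x ^ (2 * k + 6) * F x :=
    Continuous.integrable_of_hasCompactSupport (by fun_prop)
      (hζ.hasCompactSupport_pow (by omega)).mul_right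
  have hle := integral_le_integral_add_mul_measureReal
    (c := C * (cutoffConst n / R) ^ (6 * q / (q - 2)))
    (Metric.isClosed_closedBall (x := (0 : ℝ^n)) (ε := 2 * R)).measurableSet
    measure_closedBall_lt_top.ne (hζ.integrable_weightedValue_sq hv hk0) (hFint.const_mul ε)
    (fun x _ => ?_) fun x hx => ?_
  · rw [integral_const_mul] at hle
    linarith [mul_le_mul_of_nonneg_left (hvol R hR) hC.le]
  · have hζ0 := hζ.nonneg x
    rw [weightedValue_sq_eq]
    refine (hyoung _ _ (by positivity) (pow_nonneg hζ.pos.le _)).trans ?_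
    rw [sq_rpow_half (by positivity), pow_six_rpow_div_sub_two hζ.pos.le]
    gcongr
    refine (pow_mul_rpow_le hk hζ0 (hζ.le_one x) (abs_nonneg _)).trans ?_
    gcongr
    exact hvF x
  · rw [weightedValue_ballCutoff_eq_zero hk0 hR0 _ _ hx]
    rw [mem_closedBall_zero_iff, not_le] at hx
    simp [ballCutoff_eq_zero hR0 hx.le]

lemma IsCutoff.weightedValue_sq_le {ζ : ℝ^n → ℝ} {r : ℝ} (hζ : IsCutoff ζ r) (f : ℝ^n → ℝ)
    (k : ℕ) (x : ℝ^n) : weightedValue f ζ r k x ^ 2 ≤ r ^ 6 * f x ^ 2 := by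
  have hnonneg := hζ.nonneg x
  rw [weightedValue_sq_eq, mul_comm, ← sq_abs (f x)]
  have := hζ.pos
  gcongr
  exact mul_le_of_le_one_left (abs_nonneg _) (pow_le_one₀ hnonneg (hζ.le_one x))

lemma tendsto_integral_weightedValue_ballCutoff_sq (hq : 2 < q)
    (hqn : ((n : ℝ) - 6) * q ≤ 2 * n) (hk : k ≠ 0) (hv : Continuous v)
    (hvq : Integrable fun x => |v x| ^ q) :
    Tendsto (fun R => ∫ x, weightedValue v (ballCutoff R) (cutoffConst n / R) k x ^ 2)
      atTop (nhds 0) := by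
  obtain ⟨V, hV, hvol⟩ := exists_rpow_mul_volume_closedBall_le
    (natCast_le_six_mul_div_sub_two hq hqn)
  refine tendsto_order.2 ⟨fun a ha => .of_forall fun R => ha.trans_le (by positivity),
    fun ε hε => ?_⟩
  obtain ⟨C, hC, hyoung⟩ := exists_mul_le_mul_rpow_add_mul_rpow
    (holderConjugate_half_div_sub_two hq).symm (by positivity : 0 < ε / (2 * V))
  have hscale : Tendsto (fun R => (cutoffConst n / R) ^ 6) atTop (nhds 0) := by
    simpa using (tendsto_const_nhds (x := cutoffConst n).div_atTop tendsto_id).pow 6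
  have hmin := tendsto_integral_min_mul (hvq.const_mul C) (H := fun x => v x ^ 2)
    (hv.pow 2).aestronglyMeasurable (fun x => by positivity) (fun x => sq_nonneg (v x))
    (fun R => by positivity) hscale
  filter_upwards [hmin.eventually_lt_const (half_pos hε), eventually_ge_atTop 1] with R hlt hR
  have hR0 : 0 < R := one_pos.trans_le hR
  have hζ := isCutoff_ballCutoff (n := n) hR0
  have hminint : Integrable fun x => min (C * |v x| ^ q) ((cutoffConst n / R) ^ 6 * v x ^ 2) :=
    (hvq.const_mul C).mono' ((hvq.const_mul C).aestronglyMeasurable.inf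
      (((hv.pow 2).const_mul _).aestronglyMeasurable)) (.of_forall fun x => by
        rw [Real.norm_of_nonneg (by positivity)]
        exact min_le_left _ _)
  have hle := integral_le_integral_add_mul_measureReal
    (c := ε / (2 * V) * (cutoffConst n / R) ^ (6 * q / (q - 2)))
    (Metric.isClosed_closedBall (x := (0 : ℝ^n)) (ε := 2 * R)).measurableSet
    measure_closedBall_lt_top.ne (hζ.integrable_weightedValue_sq hv hk) hminint
    (fun x _ => ?_) fun x hx => ?_
  · have hrest := mul_le_mul_of_nonneg_left (hvol R hR) (by positivity : 0 ≤ ε / (2 * V))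
    rw [show ε / (2 * V) * V = ε / 2 by field_simp] at hrest
    linarith
  · have hle := hζ.weightedValue_sq_le v k x
    refine (le_min ?_ ?_).trans (min_add_add_right _ _ _).le
    · have := hyoung _ _ (pow_nonneg hζ.pos.le 6) (sq_nonneg |v x|)
      rw [sq_rpow_half (abs_nonneg _), pow_six_rpow_div_sub_two hζ.pos.le, sq_abs] at this
      linarith
    · have := Real.rpow_nonneg hζ.pos.le (6 * q / (q - 2))
      exact hle.trans (le_add_of_nonneg_right (by positivity))
  · rw [weightedValue_ballCutoff_eq_zero hk hR0 _ _ hx, zero_pow two_ne_zero]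
    positivity

end LowerOrderTerm

section Stability

/-- Stability on `s` of the operator `(-Δ)³ - p w`: its quadratic form is nonnegative on the test
functions supported in `s`. -/
def IsStableOn (p : ℝ) (w : ℝ^n → ℝ) (s : Set (ℝ^n)) : Prop :=
  ∀ φ : ℝ^n → ℝ, ContDiff ℝ ∞ φ → HasCompactSupport φ → tsupport φ ⊆ s →
    p * (∫ x, w x * φ x ^ 2) ≤ ∫ x, ‖∇ (laplacian φ) x‖ ^ 2

/-- The defect of `v` as a solution of the linear equation `(-Δ)³ v = w v`. -/
def linearResidual (w v : ℝ^n → ℝ) (x : ℝ^n) : ℝ :=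
  -laplacian (laplacian (laplacian v)) x - w x * v x

variable {p q r δ : ℝ} {k : ℕ} {v w φ ζ : ℝ^n → ℝ} {s : Set (ℝ^n)}

@[fun_prop]
lemma continuous_linearResidual (hw : Continuous w) (hv : ContDiff ℝ ∞ v) :
    Continuous (linearResidual w v) := by
  unfold linearResidual
  fun_prop

lemma IsStableOn.mul_integral_pow_mul_le (hst : IsStableOn p w s) (hv : ContDiff ℝ ∞ v)
    (hvs : tsupport v ⊆ s) (hζ : IsCutoff ζ r) {m : ℕ} (hm : m ≠ 0) :
    p * (∫ x, ζ x ^ (2 * m) * (w x * v x ^ 2))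
      ≤ ∫ x, ‖∇ (laplacian fun y => v y * ζ y ^ m) x‖ ^ 2 := by
  refine le_of_eq_of_le ?_ (hst _ (hv.mul (hζ.contDiff_pow m))
    (hζ.hasCompactSupport_pow hm).mul_left ((tsupport_mul_subset_left).trans hvs))
  congr 2
  funext x
  ring

lemma integral_inner_gradient_laplacian_mul_eq (hv : ContDiff ℝ ∞ v) (hw : Continuous w)
    (hφ : ContDiff ℝ ∞ φ) (hφc : HasCompactSupport φ) :
    ∫ x, inner ℝ (∇ (laplacian v) x) (∇ (laplacian fun y => v y * φ y) x)
      = (∫ x, φ x * (w x * v x ^ 2)) + ∫ x, φ x * (linearResidual w v x * v x) := by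
  have hint : ∀ {F : ℝ^n → ℝ}, Continuous F → Integrable fun x => φ x * F x := fun hF =>
    (hφ.continuous.mul hF).integrable_of_hasCompactSupport hφc.mul_right
  rw [integral_inner_gradient_laplacian hv (hv.mul hφ) hφc.mul_left, ← integral_neg,
    ← integral_add (hint (by fun_prop)) (hint (by fun_prop))]
  congr 1
  funext x
  unfold linearResidual
  ring

lemma IsCutoff.integral_pow_mul_le_integral_abs (hζ : IsCutoff ζ r) {F : ℝ^n → ℝ}
    (hF : Integrable F) (m : ℕ) :
    ∫ x, ζ x ^ m * F x ≤ ∫ x, |F x| := by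
  refine (le_abs_self _).trans (norm_integral_le_of_norm_le (f := fun x => ζ x ^ m * F x) hF.abs
    (.of_forall fun x => ?_))
  rw [norm_mul, Real.norm_of_nonneg (pow_nonneg (hζ.nonneg x) _)]
  exact mul_le_of_le_one_left (abs_nonneg _) (pow_le_one₀ (hζ.nonneg x) (hζ.le_one x))

lemma weightedGradLaplacian_sq_eq (f ζ : ℝ^n → ℝ) (k : ℕ) (x : ℝ^n) :
    weightedGradLaplacian f ζ k x ^ 2 = ζ x ^ (2 * k + 6) * ‖∇ (laplacian f) x‖ ^ 2 := by
  unfold weightedGradLaplacian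
  ring

/-- The choice of `δ` makes `(1 + δ) / (1 - δ) < p`; the terms multiplied by `ε` are then
absorbed into the energy `E`. -/
lemma exists_absorption (hp : 1 < p) :
    ∃ δ, 0 < δ ∧ ∀ C₁ C₂ : ℝ, 0 ≤ C₁ → 0 ≤ C₂ → ∃ ε, 0 < ε ∧ ∀ A K : ℝ, ∃ B, ∀ E D Q : ℝ, 0 ≤ E →
      p * E ≤ (1 + δ) * D + C₁ * Q → (1 - δ) * D ≤ E + K + C₂ * Q → Q ≤ ε * E + A →
        E ≤ B ∧ D ≤ B := by
  have := sub_pos.2 hp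
  set δ := (p - 1) / (2 * (p + 1)) with hδdef
  have hδ : 0 < δ := by positivity
  have hδp : p * (1 - δ) - (1 + δ) = (p - 1) / 2 := by
    rw [hδdef]
    field_simp
    ring
  have hδ1 : 0 < 1 - δ := by nlinarith
  refine ⟨δ, hδ, fun C₁ C₂ hC₁ hC₂ => ?_⟩
  set M := (1 + δ) * C₂ + (1 - δ) * C₁
  have hM : 0 ≤ M := by positivity
  set ε := (p - 1) / (4 * (M + 1)) with hεdef
  have hε : 0 < ε := by positivity
  have hMε : M * ε ≤ (p - 1) / 4 := by
    rw [hεdef, mul_div_assoc', div_le_div_iff₀ (by positivity) (by positivity)]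
    nlinarith
  refine ⟨ε, hε, fun A K => ?_⟩
  set B₁ := ((1 + δ) * K + M * A) / ((p - 1) / 4) with hB₁
  refine ⟨max B₁ ((B₁ + K + C₂ * (ε * B₁ + A)) / (1 - δ)), fun E D Q hE hstab heq hQ => ?_⟩
  have hEB : E ≤ B₁ := by
    rw [hB₁, le_div_iff₀ (by positivity)]
    have hEQ : (p - 1) / 2 * E ≤ (1 + δ) * K + M * Q := by
      rw [← hδp]
      have h₁ := mul_le_mul_of_nonneg_left hstab hδ1.le
      have h₂ := mul_le_mul_of_nonneg_left heq (by positivity : 0 ≤ 1 + δ)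
      linarith
    have h₁ := mul_le_mul_of_nonneg_left hQ hM
    have h₂ := mul_le_mul_of_nonneg_right hMε hE
    linarith
  refine ⟨hEB.trans (le_max_left _ _), le_trans ?_ (le_max_right _ _)⟩
  rw [le_div_iff₀ hδ1, mul_comm]
  calc (1 - δ) * D ≤ E + K + C₂ * (ε * E + A) := heq.trans (by gcongr)
    _ ≤ B₁ + K + C₂ * (ε * B₁ + A) := by gcongr

lemma integrable_of_isStableOn (hp : 1 < p) (hpn : ((n : ℝ) - 6) * p ≤ n + 6)
    (hv : ContDiff ℝ ∞ v) (hw : Continuous w) (hvw : ∀ x, |v x| ^ (p + 1) ≤ w x * v x ^ 2)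
    (hres : HasCompactSupport (linearResidual w v)) (hst : IsStableOn p w s)
    (hvs : tsupport v ⊆ s) :
    Integrable (fun x => w x * v x ^ 2) ∧ Integrable fun x => ‖∇ (laplacian v) x‖ ^ 2 := by
  obtain ⟨k, hk⟩ := exists_natCast_six_le_mul_sub_two (by linarith : 2 < p + 1)
  have hk0 := ne_zero_of_six_le_mul_sub_two hk
  obtain ⟨δ, hδ, habsorb⟩ := exists_absorption hp
  obtain ⟨C₁, hC₁, hupper⟩ := exists_integral_norm_gradient_laplacian_mul_pow_sq_le n hk0 hδ
  obtain ⟨C₂, hC₂, hlower⟩ :=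
    exists_abs_integral_inner_gradient_laplacian_mul_pow_sub_le n hk0 hδ
  obtain ⟨ε, hε, habsorb⟩ := habsorb C₁ C₂ hC₁ hC₂
  have hF0 : ∀ x, 0 ≤ w x * v x ^ 2 := fun x => (by positivity : 0 ≤ |v x| ^ (p + 1)).trans (hvw x)
  obtain ⟨A, hvalue⟩ := exists_integral_weightedValue_ballCutoff_sq_le (by linarith)
    (by linarith) hk hv.continuous (by fun_prop) hvw hε
  have hresint : Integrable fun x => linearResidual w v x * v x :=
    Continuous.integrable_of_hasCompactSupport (by fun_prop) hres.mul_right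
  obtain ⟨B, hB⟩ := habsorb A (∫ x, |linearResidual w v x * v x|)
  have hbound : ∀ R, 1 ≤ R → (∫ x, ballCutoff R x ^ (2 * k + 6) * (w x * v x ^ 2)) ≤ B ∧
      (∫ x, ballCutoff R x ^ (2 * k + 6) * ‖∇ (laplacian v) x‖ ^ 2) ≤ B := fun R hR => by
    have hζ := isCutoff_ballCutoff (n := n) (one_pos.trans_le hR)
    have hstab := (hst.mul_integral_pow_mul_le hv hvs hζ (by omega : k + 3 ≠ 0)).trans
      (hupper hv hζ)
    have heq := hlower hv hζ
    rw [integral_inner_gradient_laplacian_mul_eq hv hw (hζ.contDiff_pow _)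
      (hζ.hasCompactSupport_pow (by omega))] at heq
    simp only [← weightedGradLaplacian_sq_eq]
    refine hB _ _ _ (integral_nonneg fun x => mul_nonneg (pow_nonneg (hζ.nonneg x) _) (hF0 x))
      hstab ?_ (hvalue R hR)
    linarith [(abs_le.1 heq).1, hζ.integral_pow_mul_le_integral_abs hresint (2 * k + 6)]
  exact ⟨integrable_of_integral_ballCutoff_pow_mul_le (by fun_prop) hF0 (by omega)
      fun R hR => (hbound R hR).1,
    integrable_of_integral_ballCutoff_pow_mul_le (by fun_prop) (fun x => by positivity) (by omega)
      fun R hR => (hbound R hR).2⟩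

end Stability

section EnergyIdentity

variable {q : ℝ} {v w : ℝ^n → ℝ}

lemma integral_norm_gradient_laplacian_sq_eq_of_linearResidual_eq_zero (hq : 2 < q)
    (hqn : ((n : ℝ) - 6) * q ≤ 2 * n) (hv : ContDiff ℝ ∞ v) (hw : Continuous w)
    (hres : ∀ x, linearResidual w v x = 0) (hvq : Integrable fun x => |v x| ^ q)
    (hE : Integrable fun x => w x * v x ^ 2)
    (hD : Integrable fun x => ‖∇ (laplacian v) x‖ ^ 2) :
    ∫ x, ‖∇ (laplacian v) x‖ ^ 2 = ∫ x, w x * v x ^ 2 := by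
  set E := ∫ x, w x * v x ^ 2
  set D := ∫ x, ‖∇ (laplacian v) x‖ ^ 2
  have hlim : ∀ δ > 0, |E - D| ≤ δ * D := fun δ hδ => by
    obtain ⟨C, -, hlower⟩ :=
      exists_abs_integral_inner_gradient_laplacian_mul_pow_sub_le n one_ne_zero hδ
    have hEδ := tendsto_integral_ballCutoff_pow_mul hE 8
    have hDδ := tendsto_integral_ballCutoff_pow_mul hD 8
    have hQδ := tendsto_integral_weightedValue_ballCutoff_sq hq hqn one_ne_zero hv.continuous hvq
    have hright := (hDδ.const_mul δ).add (hQδ.const_mul C)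
    rw [mul_zero, add_zero] at hright
    refine le_of_tendsto_of_tendsto (hEδ.sub hDδ).abs hright ?_
    filter_upwards [eventually_gt_atTop 0] with R hR
    have hζ := isCutoff_ballCutoff (n := n) hR
    have h := hlower hv hζ
    rw [integral_inner_gradient_laplacian_mul_eq hv hw (hζ.contDiff_pow _)
      (hζ.hasCompactSupport_pow (by omega))] at h
    simpa [weightedGradLaplacian_sq_eq, hres] using h
  have hright : Tendsto (fun δ => δ * D) (nhdsWithin 0 (Set.Ioi 0)) (nhds 0) := by
    simpa using (tendsto_id (x := nhds (0 : ℝ))).mono_left nhdsWithin_le_nhds |>.mul_const D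
  have := ge_of_tendsto hright (eventually_mem_nhdsWithin.mono hlim)
  linarith [abs_nonpos_iff.1 this]

end EnergyIdentity

section Truncation

variable {η u w F G : ℝ^n → ℝ} {x : ℝ^n}

lemma exists_contDiff_hasCompactSupport_tsupport_one_sub_subset {Θ : Set (ℝ^n)}
    (hΘ : Bornology.IsBounded Θ) :
    ∃ η : ℝ^n → ℝ, ContDiff ℝ ∞ η ∧ HasCompactSupport η ∧ (∀ x, 0 ≤ η x) ∧ (∀ x, η x ≤ 1) ∧
      tsupport (fun x => 1 - η x) ⊆ Θᶜ := by
  obtain ⟨ρ, hρ, hΘρ⟩ := hΘ.subset_ball_lt 0 0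
  let b : ContDiffBump (0 : ℝ^n) := ⟨ρ, ρ + 1, hρ, lt_add_one ρ⟩
  refine ⟨b, b.contDiff, b.hasCompactSupport, fun x => b.nonneg, fun x => b.le_one,
    fun x hx hxΘ => notMem_tsupport_iff_eventuallyEq.2 ?_ hx⟩
  filter_upwards [b.eventuallyEq_one_of_mem_ball (hΘρ hxΘ)] with y hy
  simp [hy]

lemma one_sub_mul_eventuallyEq (hx : x ∉ tsupport η) (u : ℝ^n → ℝ) :
    (fun y => (1 - η y) * u y) =ᶠ[nhds x] u := by
  filter_upwards [notMem_tsupport_iff_eventuallyEq.1 hx] with y hy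
  simp [hy]

lemma hasCompactSupport_linearResidual_one_sub_mul (hηc : HasCompactSupport η)
    (hres : ∀ x, linearResidual w u x = 0) :
    HasCompactSupport (linearResidual w fun x => (1 - η x) * u x) := by
  refine .intro hηc fun x hx => ?_
  have hloc := one_sub_mul_eventuallyEq hx u
  rw [linearResidual, (laplacian_congr (laplacian_congr (laplacian_congr hloc))).eq_of_nhds,
    hloc.eq_of_nhds]
  exact hres x

lemma integrable_of_eq_off_isCompact {K : Set (ℝ^n)} (hK : IsCompact K) (hF : Continuous F)
    (hG : Continuous G) (hFint : Integrable F) (hFG : ∀ x ∉ K, F x = G x) : Integrable G := by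
  have hc : HasCompactSupport fun x => G x - F x := .intro hK fun x hx => by simp [hFG x hx]
  simpa using hFint.add ((hG.sub hF).integrable_of_hasCompactSupport hc)

lemma abs_rpow_sub_one_mul_sq {p : ℝ} (hp : 1 < p) (a : ℝ) :
    |a| ^ (p - 1) * a ^ 2 = |a| ^ (p + 1) := by
  rw [← sq_abs, ← Real.rpow_natCast, ← Real.rpow_add' (abs_nonneg a) (by push_cast; linarith)]
  congr 1
  push_cast
  ring

lemma abs_mul_rpow_le_mul_sq {p c a b : ℝ} (hp : 1 < p) (hc0 : 0 ≤ c) (hc1 : c ≤ 1)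
    (hab : |a| ^ (p + 1) ≤ b * a ^ 2) : |c * a| ^ (p + 1) ≤ b * (c * a) ^ 2 := by
  have hcp : c ^ (p + 1) ≤ c ^ 2 := by
    rw [← Real.rpow_natCast]
    exact Real.rpow_le_rpow_of_exponent_ge' hc0 hc1 (by positivity) (by push_cast; linarith)
  calc |c * a| ^ (p + 1) = c ^ (p + 1) * |a| ^ (p + 1) := by
        rw [abs_mul, abs_of_nonneg hc0, Real.mul_rpow hc0 (abs_nonneg a)]
    _ ≤ c ^ 2 * (b * a ^ 2) := by gcongr
    _ = b * (c * a) ^ 2 := by ring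

lemma integrable_of_isStableOn_compl {p : ℝ} (hp : 1 < p) (hpn : ((n : ℝ) - 6) * p ≤ n + 6)
    (hu : ContDiff ℝ ∞ u) (hw : Continuous w) (huw : ∀ x, |u x| ^ (p + 1) ≤ w x * u x ^ 2)
    (hres : ∀ x, linearResidual w u x = 0) {Θ : Set (ℝ^n)} (hΘ : Bornology.IsBounded Θ)
    (hst : IsStableOn p w Θᶜ) :
    Integrable (fun x => w x * u x ^ 2) ∧ Integrable fun x => ‖∇ (laplacian u) x‖ ^ 2 := by
  obtain ⟨η, hη, hηc, hη0, hη1, hηΘ⟩ :=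
    exists_contDiff_hasCompactSupport_tsupport_one_sub_subset hΘ
  have hv : ContDiff ℝ ∞ fun x => (1 - η x) * u x := by fun_prop
  obtain ⟨hE, hD⟩ := integrable_of_isStableOn hp hpn hv hw
    (fun x => abs_mul_rpow_le_mul_sq hp (sub_nonneg.2 (hη1 x)) (sub_le_self _ (hη0 x)) (huw x))
    (hasCompactSupport_linearResidual_one_sub_mul hηc hres) hst
    (tsupport_mul_subset_left.trans hηΘ)
  constructor
  · refine integrable_of_eq_off_isCompact hηc (by fun_prop) (by fun_prop) hE fun x hx => ?_
    rw [(one_sub_mul_eventuallyEq hx u).eq_of_nhds]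
  · refine integrable_of_eq_off_isCompact hηc (by fun_prop) (by fun_prop) hD fun x hx => ?_
    rw [gradient_congr (laplacian_congr (one_sub_mul_eventuallyEq hx u))]

end Truncation

end Development

theorem triharmonic_finiteMorse_critical_finiteEnergy_general {n : ℕ} {p : ℝ} (hp : 1 < p)
    (hpn : ((n : ℝ) - 6) * p ≤ n + 6) {u : EuclideanSpace ℝ (Fin n) → ℝ} (hu : ContDiff ℝ ∞ u)
    (heq : ∀ x, laplacian (laplacian (laplacian u)) x = -(|u x| ^ (p - 1) * u x))
    {Θ : Set (EuclideanSpace ℝ (Fin n))} (hΘ : Bornology.IsBounded Θ)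
    (hstab : IsStableOn p (fun x => |u x| ^ (p - 1)) Θᶜ) :
    Integrable (fun x => ‖∇ (laplacian u) x‖ ^ 2) ∧ Integrable (fun x => |u x| ^ (p + 1)) ∧
      ∫ x, ‖∇ (laplacian u) x‖ ^ 2 = ∫ x, |u x| ^ (p + 1) := by
  set w : EuclideanSpace ℝ (Fin n) → ℝ := fun x => |u x| ^ (p - 1)
  have hw : Continuous w := hu.continuous.abs.rpow_const fun _ => .inr (by linarith)
  have hwu : (fun x => |u x| ^ (p + 1)) = fun x => w x * u x ^ 2 :=
    funext fun x => (abs_rpow_sub_one_mul_sq hp (u x)).symm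
  have hres : ∀ x, linearResidual w u x = 0 := fun x => by simp [linearResidual, heq, w]
  obtain ⟨hE, hD⟩ :=
    integrable_of_isStableOn_compl hp hpn hu hw (fun x => (congr_fun hwu x).le) hres hΘ hstab
  rw [hwu]
  exact ⟨hD, hE, integral_norm_gradient_laplacian_sq_eq_of_linearResidual_eq_zero (by linarith)
    (by linarith) hu hw hres (hwu ▸ hE) hE hD⟩

/-- **Theorem 1.2(3) (critical case).** Let `n ≥ 7`, `p = (n+6)/(n-6)`, and let `u` be a smooth
solution of `(-Δ)³ u = |u|^{p-1} u` on `ℝⁿ` that is stable outside a compact set `Θ`. Then `u`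
has finite energy: `∫ ‖∇Δu‖² = ∫ |u|^{p+1} < +∞`. -/
theorem triharmonic_finiteMorse_critical_finiteEnergy (n : ℕ) (hn : 7 ≤ n) (p : ℝ)
    (hp : p = ((n : ℝ) + 6) / ((n : ℝ) - 6))
    (u : EuclideanSpace ℝ (Fin n) → ℝ) (hu : ContDiff ℝ (⊤ : ℕ∞) u)
    (heq : ∀ x, laplacian (laplacian (laplacian u)) x = -(|u x| ^ (p - 1) * u x))
    (Θ : Set (EuclideanSpace ℝ (Fin n))) (hΘ : IsCompact Θ)
    (hstab : ∀ φ : EuclideanSpace ℝ (Fin n) → ℝ, ContDiff ℝ (⊤ : ℕ∞) φ →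
      HasCompactSupport φ → tsupport φ ⊆ Θᶜ →
      p * (∫ x, |u x| ^ (p - 1) * φ x ^ 2) ≤ ∫ x, ‖gradient (laplacian φ) x‖ ^ 2) :
    Integrable (fun x => ‖gradient (laplacian u) x‖ ^ 2) ∧
    Integrable (fun x => |u x| ^ (p + 1)) ∧
    (∫ x, ‖gradient (laplacian u) x‖ ^ 2) = ∫ x, |u x| ^ (p + 1) := by
  have hn' : (7 : ℝ) ≤ n := mod_cast hn
  have hn6 : 0 < (n : ℝ) - 6 := by linarith
  refine triharmonic_finiteMorse_critical_finiteEnergy_general ?_ ?_ hu heq hΘ.isBounded hstab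
  · rw [hp, lt_div_iff₀ hn6]
    linarith
  · rw [hp, mul_div_cancel₀ _ hn6.ne']
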